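/- arXiv:1712.02437 — 2 statements merged into one kernel-verified Lean document; each statement's English description precedes it below -/
import Mathlib

section
/- Let $p \geq 5$ be a prime. The sum $\sum_{k \text{ QR}} e^{2\pi i k/p}$, where $k$ ranges over the quadratic residues in $\{1,\dots,p-1\}$, equals $(-1+\sqrt{p})/2$ if $p \equiv 1 \pmod 4$ and $(-1+i\sqrt{p})/2$ if $p \equiv 3 \pmod 4$. -/
open Finset Complex

namespace GaussAux
open Filter Topology HurwitzZeta

lemma hasSum_theta {τ : ℂ} (h : 0 < τ.im) :
    HasSum (fun n : ℤ => cexp (Real.pi * I * (n : ℂ) ^ 2 * τ)) (jacobiTheta τ) := by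
  have := hasSum_jacobiTheta₂_term 0 h
  rw [← jacobiTheta_eq_jacobiTheta₂] at this
  simpa [jacobiTheta₂_term] using this

lemma hasSum_theta_even {s : ℂ} (h : 0 < s.im) :
    HasSum (fun n : ℤ => if Even n then cexp (Real.pi * I * (n : ℂ) ^ 2 * s) else 0)
      (jacobiTheta (4 * s)) := by
  have h4 : 0 < (4 * s).im := by simpa using h
  have hinj : Function.Injective (fun n : ℤ => 2 * n) := fun a b hab => by
    simpa using hab
  rw [← hinj.hasSum_iff]
  · refine (hasSum_theta h4).congr_fun ?_ |> fun h => h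
    intro n
    simp
    ring_nf
  · intro x hx
    rw [if_neg]
    rintro ⟨r, rfl⟩
    exact hx ⟨r, by simp; ring⟩

lemma theta_shift (p : ℕ) {s : ℂ} (h : 0 < s.im) :
    jacobiTheta (-(p : ℂ) / 2 + s)
      = (-I) ^ p * jacobiTheta s + (1 - (-I) ^ p) * jacobiTheta (4 * s) := by
  have h' : 0 < (-(p : ℂ) / 2 + s).im := by simpa using h
  refine (hasSum_theta h').unique ?_
  refine (((hasSum_theta h).mul_left ((-I) ^ p)).add
    ((hasSum_theta_even h).mul_left (1 - (-I) ^ p))).congr_fun (fun n => ?_)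
  rw [mul_add, Complex.exp_add]
  have key : cexp (Real.pi * I * (n : ℂ) ^ 2 * (-(p : ℂ) / 2)) =
      if Even n then 1 else (-I) ^ p := by
    split_ifs with hn
    · obtain ⟨r, rfl⟩ := hn
      rw [Complex.exp_eq_one_iff]
      exact ⟨- r ^ 2 * p, by push_cast; ring⟩
    · obtain ⟨r, rfl⟩ := Int.not_even_iff_odd.mp hn
      have : (Real.pi * I * ((2 * r + 1 : ℤ) : ℂ) ^ 2 * (-(p : ℂ) / 2)) =
        p * (-Real.pi / 2 * I) + ((-(r ^ 2 + r) * p : ℤ) : ℂ) * (2 * Real.pi * I) := by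
        push_cast; ring
      rw [this, Complex.exp_add, Complex.exp_int_mul_two_pi_mul_I, mul_one, Complex.exp_nat_mul,
        Complex.exp_neg_pi_div_two_mul_I]
  rw [key]
  split_ifs <;> ring

lemma theta_fe (τ : ℂ) : jacobiTheta τ = 1 / (-I * τ) ^ (1 / 2 : ℂ) * jacobiTheta (-1 / τ) := by
  rw [jacobiTheta_eq_jacobiTheta₂, jacobiTheta_eq_jacobiTheta₂, jacobiTheta₂_functional_equation]
  simp

lemma theta_lim : Tendsto jacobiTheta (comap im atTop) (𝓝 1) := by
  have h := isBigO_at_im_infty_jacobiTheta_sub_one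
  have h2 : Tendsto (fun τ : ℂ => Real.exp (-Real.pi * τ.im)) (comap im atTop) (𝓝 0) := by
    refine Real.tendsto_exp_atBot.comp ?_
    exact (tendsto_comap).const_mul_atTop_of_neg (by simpa using Real.pi_pos)
  have := h.trans_tendsto h2
  simpa using this.add_const 1

lemma cpow_half (u : ℝ) (hu : 0 < u) (w : ℂ) (hw : w ≠ 0) :
    ((u : ℂ) ^ 2 * w) ^ (1 / 2 : ℂ) = u * w ^ (1 / 2 : ℂ) := by
  have hu' : (u : ℂ) ≠ 0 := by exact_mod_cast hu.ne'
  rw [cpow_def_of_ne_zero (by positivity), cpow_def_of_ne_zero hw, ← ofReal_pow,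
    log_ofReal_mul (by positivity) hw, add_mul, Complex.exp_add]
  congr 1
  rw [Real.log_pow]
  push_cast
  rw [show (2 * (Real.log u : ℂ)) * (1 / 2) = Real.log u by ring, ← ofReal_exp, Real.exp_log hu]

lemma theta_small (p : ℕ) (hp : 0 < p) (c : ℕ) (hc : 0 < c) :
    Tendsto (fun u : ℝ => (u : ℂ) *
        jacobiTheta (c * (I * p * (u : ℂ) ^ 2 / (2 * (2 / p + I * (u : ℂ) ^ 2)))))
      (𝓝[>] 0) (𝓝 (1 / ((c * p ^ 2 / 4 : ℝ) : ℂ) ^ (1 / 2 : ℂ))) := by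
  have hp' : (p : ℂ) ≠ 0 := by exact_mod_cast hp.ne'
  have hc' : (c : ℂ) ≠ 0 := by exact_mod_cast hc.ne'
  have hpr : (0 : ℝ) < p := by exact_mod_cast hp
  have hcr : (0 : ℝ) < c := by exact_mod_cast hc
  have hτ (u : ℝ) (hu : 0 < u) : (2 / p + I * (u : ℂ) ^ 2 : ℂ) ≠ 0 := by
    intro h
    have := congrArg Complex.im h
    rw [← ofReal_natCast, ← ofReal_pow, ← ofReal_ofNat, ← ofReal_div, add_im, ofReal_im,
      I_mul_im, ofReal_re, zero_im] at this
    have := pow_pos hu 2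
    linarith
  have e : (fun u : ℝ => 1 / (c * p / (2 * (2 / p + I * (u : ℂ) ^ 2)) : ℂ) ^ (1 / 2 : ℂ) *
      jacobiTheta (((-2 / (c * p) : ℝ) : ℂ) + ((4 / (c * p ^ 2) * (u⁻¹) ^ 2 : ℝ) : ℂ) * I)) =ᶠ[𝓝[>] 0]
      (fun u : ℝ => (u : ℂ) *
        jacobiTheta (c * (I * p * (u : ℂ) ^ 2 / (2 * (2 / p + I * (u : ℂ) ^ 2))))) := by
    filter_upwards [self_mem_nhdsWithin] with u (hu : 0 < u)
    have hu' : (u : ℂ) ≠ 0 := by exact_mod_cast hu.ne'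
    have h0 := hτ u hu
    rw [theta_fe (c * _)]
    have h1 : -I * (c * (I * p * (u : ℂ) ^ 2 / (2 * (2 / p + I * (u : ℂ) ^ 2)))) =
        (u : ℂ) ^ 2 * (c * p / (2 * (2 / p + I * (u : ℂ) ^ 2))) := by
      linear_combination (-(c * (p * (u : ℂ) ^ 2 / (2 * (2 / p + I * (u : ℂ) ^ 2))))) * I_sq
    have hw : (c * p / (2 * (2 / p + I * (u : ℂ) ^ 2)) : ℂ) ≠ 0 := by
      apply div_ne_zero (mul_ne_zero hc' hp') (mul_ne_zero two_ne_zero h0)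
    rw [h1, cpow_half u hu _ hw]
    have h2 : -1 / (c * (I * p * (u : ℂ) ^ 2 / (2 * (2 / p + I * (u : ℂ) ^ 2)))) =
      ((-2 / (c * p) : ℝ) : ℂ) + ((4 / (c * p ^ 2) * (u⁻¹) ^ 2 : ℝ) : ℂ) * I := by
      have h3 : ((-2 / (c * p) : ℝ) : ℂ) + ((4 / (c * p ^ 2) * (u⁻¹) ^ 2 : ℝ) : ℂ) * I =
          2 * I * (2 / p + I * (u : ℂ) ^ 2) / (c * p * (u : ℂ) ^ 2) := by
        push_cast
        field_simp
        ring_nf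
        simp only [I_sq]
        ring
      rw [h3]
      generalize (2 / p + I * (u : ℂ) ^ 2 : ℂ) = D at h0
      field_simp
      simp [I_sq]
    rw [h2]
    field_simp
  refine Tendsto.congr' e ?_
  rw [← mul_one (1 / (_ ^ _ : ℂ))]
  refine Tendsto.mul ?_ (theta_lim.comp ?_)
  · have hv : (c * p / (2 * (2 / p + I * ((0 : ℝ) : ℂ) ^ 2)) : ℂ) = ((c * p ^ 2 / 4 : ℝ) : ℂ) := by
      push_cast
      field_simp
      ring
    have hpos : (0 : ℝ) < c * p ^ 2 / 4 := by positivity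
    have hcont : ContinuousAt (fun u : ℝ =>
        1 / (c * p / (2 * (2 / p + I * (u : ℂ) ^ 2)) : ℂ) ^ (1 / 2 : ℂ)) 0 := by
      refine ContinuousAt.div continuousAt_const (ContinuousAt.cpow ?_ continuousAt_const ?_) ?_
      · refine ContinuousAt.div continuousAt_const (by fun_prop) ?_
        simp [hp']
      · rw [hv]
        exact ofReal_mem_slitPlane.mpr hpos
      · rw [hv, Ne, cpow_eq_zero_iff]
        rintro ⟨h, -⟩
        exact hpos.ne' (by exact_mod_cast h)
    have := hcont.tendsto
    rw [hv] at this
    exact this.mono_left nhdsWithin_le_nhds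
  · rw [tendsto_comap_iff]
    have : (im ∘ fun u : ℝ => ((-2 / (c * p) : ℝ) : ℂ) +
        ((4 / (c * p ^ 2) * (u⁻¹) ^ 2 : ℝ) : ℂ) * I) =
        fun u : ℝ => 4 / (c * p ^ 2) * (u⁻¹) ^ 2 := by
      funext u
      simp only [Function.comp, add_im, ofReal_im, mul_I_im, ofReal_re, zero_add]
    rw [this]
    exact ((tendsto_pow_atTop two_ne_zero).comp tendsto_inv_nhdsGT_zero).const_mul_atTop
      (by positivity)

lemma cosKernel_lim (a : UnitAddCircle) : Tendsto (cosKernel a) atTop (𝓝 1) := by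
  obtain ⟨q, hq, h⟩ := isBigO_atTop_cosKernel_sub a
  have h2 : Tendsto (fun x : ℝ => Real.exp (-q * x)) atTop (𝓝 0) := by
    refine Real.tendsto_exp_atBot.comp ?_
    exact tendsto_id.const_mul_atTop_of_neg (by simpa using hq)
  simpa using (h.trans_tendsto h2).add_const 1

lemma theta_split (p : ℕ) [NeZero p] {t : ℝ} (ht : 0 < t) :
    jacobiTheta (2 / p + I * (t : ℂ)) = ∑ a : Fin p, cexp (2 * Real.pi * I * (a : ℕ) ^ 2 / p) *
      (evenKernel (((a : ℕ) / p : ℝ) : UnitAddCircle) (p ^ 2 * t) : ℂ) := by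
  have hpr : (0 : ℝ) < p := by exact_mod_cast NeZero.pos p
  have hp' : (p : ℂ) ≠ 0 := by exact_mod_cast NeZero.ne p
  have him : 0 < (2 / p + I * (t : ℂ) : ℂ).im := by
    rw [← ofReal_natCast, ← ofReal_ofNat, ← ofReal_div, add_im, ofReal_im,
      I_mul_im, ofReal_re]
    simpa using ht
  have h1 := (Int.divModEquiv p).symm.hasSum_iff.mpr (hasSum_theta him)
  have h1' := (Equiv.prodComm (Fin p) ℤ).hasSum_iff.mpr h1
  refine (h1'.prod_fiberwise (fun a => ?_)).unique (hasSum_fintype _)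
  have h2 := (hasSum_ofReal.mpr (hasSum_int_evenKernel ((a : ℕ) / p : ℝ)
    (t := p ^ 2 * t) (by positivity))).mul_left (cexp (2 * Real.pi * I * (a : ℕ) ^ 2 / p))
  refine h2.congr_fun (fun n => ?_)
  simp only [Function.comp, Equiv.prodComm_apply, Prod.swap, Int.divModEquiv_symm_apply]
  push_cast
  rw [← Complex.exp_add, Complex.exp_eq_exp_iff_exists_int]
  refine ⟨n ^ 2 * p + 2 * n * (a : ℕ), ?_⟩
  push_cast
  field_simp
  ring_nf
  simp only [I_sq]
  ring

lemma theta_left_lim (p : ℕ) [NeZero p] :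
    Tendsto (fun u : ℝ => (u : ℂ) * jacobiTheta (2 / p + I * (u : ℂ) ^ 2)) (𝓝[>] 0)
      (𝓝 ((∑ a : Fin p, cexp (2 * Real.pi * I * (a : ℕ) ^ 2 / p)) / p)) := by
  have hpr : (0 : ℝ) < p := by exact_mod_cast NeZero.pos p
  have hp' : (p : ℂ) ≠ 0 := by exact_mod_cast NeZero.ne p
  have e : (fun u : ℝ => ∑ a : Fin p, cexp (2 * Real.pi * I * (a : ℕ) ^ 2 / p) *
      ((cosKernel (((a : ℕ) / p : ℝ) : UnitAddCircle) (1 / p ^ 2 * (u⁻¹) ^ 2) : ℝ) : ℂ) / p)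
      =ᶠ[𝓝[>] 0] (fun u : ℝ => (u : ℂ) * jacobiTheta (2 / p + I * (u : ℂ) ^ 2)) := by
    filter_upwards [self_mem_nhdsWithin] with u (hu : 0 < u)
    have hu' : (u : ℂ) ≠ 0 := by exact_mod_cast hu.ne'
    have := theta_split p (t := u ^ 2) (by positivity)
    push_cast at this
    rw [this, Finset.mul_sum]
    refine Finset.sum_congr rfl fun a _ => ?_
    rw [evenKernel_functional_equation, ← mul_pow, ← Real.sqrt_eq_rpow,
      Real.sqrt_sq (by positivity), show 1 / ((p : ℝ) * u) ^ 2 = 1 / p ^ 2 * (u⁻¹) ^ 2 by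
        field_simp]
    push_cast
    field_simp
  refine Tendsto.congr' e ?_
  rw [Finset.sum_div]
  refine tendsto_finsetSum _ fun a _ => ?_
  refine Tendsto.div_const ?_ _
  conv => rhs; rw [← mul_one (cexp _)]
  refine Tendsto.const_mul _ ?_
  rw [← ofReal_one]
  refine (continuous_ofReal.tendsto _).comp ((cosKernel_lim _).comp ?_)
  exact ((tendsto_pow_atTop two_ne_zero).comp tendsto_inv_nhdsGT_zero).const_mul_atTop
      (by positivity)

lemma gauss (p : ℕ) [NeZero p] :
    ∑ a : Fin p, cexp (2 * Real.pi * I * (a : ℕ) ^ 2 / p) =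
      Real.sqrt p * (1 + I) / 2 * (1 + (-I) ^ p) := by
  have hpn := NeZero.pos p
  have hpr : (0 : ℝ) < p := by exact_mod_cast hpn
  have hp' : (p : ℂ) ≠ 0 := by exact_mod_cast NeZero.ne p
  set C : ℂ := (-I * (2 / p)) ^ (1 / 2 : ℂ) with hC
  have hCval : C = (1 - I) / Real.sqrt p := by
    have hs : ((Real.sqrt p : ℝ) : ℂ) ≠ 0 := by
      exact_mod_cast (Real.sqrt_pos.mpr hpr).ne'
    have hs2 : ((Real.sqrt p : ℝ) : ℂ) ^ 2 = p := by
      exact_mod_cast Real.sq_sqrt hpr.le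
    have h2p : (0 : ℝ) < 2 / p := by positivity
    have : -I * (2 / p) = ((Real.sqrt (2 / p) : ℝ) : ℂ) ^ 2 * (-I) := by
      rw [← ofReal_pow, Real.sq_sqrt h2p.le]
      push_cast
      ring
    rw [hC, this, cpow_half _ (Real.sqrt_pos.mpr h2p) _ (neg_ne_zero.mpr I_ne_zero),
      cpow_def_of_ne_zero (neg_ne_zero.mpr I_ne_zero), log_neg_I,
      show (-(Real.pi / 2) * I * (1 / 2) : ℂ) = ((-(Real.pi / 4) : ℝ) : ℂ) * I by
        push_cast; ring, exp_mul_I, ← ofReal_cos, ← ofReal_sin, Real.cos_neg, Real.sin_neg,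
      Real.cos_pi_div_four, Real.sin_pi_div_four, Real.sqrt_div (by norm_num)]
    have h22 : ((Real.sqrt 2 : ℝ) : ℂ) ^ 2 = 2 := by
      exact_mod_cast Real.sq_sqrt (by norm_num : (0 : ℝ) ≤ 2)
    push_cast
    field_simp
    linear_combination (1 - I) * h22
  have hmem : (-I * (2 / p) : ℂ) ∈ slitPlane := by
    rw [mem_slitPlane_iff]
    right
    rw [neg_mul, neg_im, I_mul_im, ← ofReal_natCast, ← ofReal_ofNat, ← ofReal_div, ofReal_re]
    exact neg_ne_zero.mpr (by positivity)
  have hC0 : C ≠ 0 := by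
    rw [hC, Ne, cpow_eq_zero_iff]
    simp [hp']
  have hlimC : Tendsto (fun u : ℝ => 1 / (-I * (2 / p + I * (u : ℂ) ^ 2)) ^ (1 / 2 : ℂ)) (𝓝[>] 0)
      (𝓝 (1 / C)) := by
    have hcont : ContinuousAt (fun u : ℝ =>
        1 / (-I * (2 / p + I * (u : ℂ) ^ 2)) ^ (1 / 2 : ℂ)) 0 := by
      refine ContinuousAt.div continuousAt_const (ContinuousAt.cpow (by fun_prop) continuousAt_const ?_) ?_
      · simpa using hmem
      · simpa [hC] using hC0
    have := hcont.tendsto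
    simp only [ofReal_zero, ne_eq, OfNat.ofNat_ne_zero, not_false_eq_true, zero_pow, mul_zero,
      add_zero] at this
    exact this.mono_left nhdsWithin_le_nhds
  have half (x : ℝ) (hx : 0 < x) : ((x ^ 2 : ℝ) : ℂ) ^ (1 / 2 : ℂ) = x := by
    have := cpow_half x hx 1 one_ne_zero
    simpa using this
  have l1 := theta_small p hpn 1 one_pos
  have l4 := theta_small p hpn 4 (by norm_num)
  rw [show (((1 : ℕ) : ℝ) * p ^ 2 / 4 : ℝ) = (p / 2) ^ 2 by push_cast; ring,
    half _ (by positivity)] at l1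
  rw [show (((4 : ℕ) : ℝ) * p ^ 2 / 4 : ℝ) = p ^ 2 by push_cast; ring,
    half _ (by positivity)] at l4
  have hR := hlimC.mul ((l1.const_mul ((-I) ^ p)).add (l4.const_mul (1 - (-I) ^ p)))
  have e : (fun u : ℝ => (u : ℂ) * jacobiTheta (2 / p + I * (u : ℂ) ^ 2)) =ᶠ[𝓝[>] 0]
    (fun u : ℝ => 1 / (-I * (2 / p + I * (u : ℂ) ^ 2)) ^ (1 / 2 : ℂ) *
        ((-I) ^ p * ((u : ℂ) * jacobiTheta
          (((1 : ℕ) : ℂ) * (I * p * (u : ℂ) ^ 2 / (2 * (2 / p + I * (u : ℂ) ^ 2))))) +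
          (1 - (-I) ^ p) * ((u : ℂ) * jacobiTheta
          (((4 : ℕ) : ℂ) * (I * p * (u : ℂ) ^ 2 / (2 * (2 / p + I * (u : ℂ) ^ 2))))))) := by
    filter_upwards [self_mem_nhdsWithin] with u (hu : 0 < u)
    have him : 0 < (2 / p + I * (u : ℂ) ^ 2 : ℂ).im := by
      rw [← ofReal_natCast, ← ofReal_ofNat, ← ofReal_div, ← ofReal_pow, add_im, ofReal_im,
        I_mul_im, ofReal_re, zero_add]
      positivity
    have h0 : (2 / p + I * (u : ℂ) ^ 2 : ℂ) ≠ 0 := fun h => by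
      rw [h] at him
      simp at him
    have hs : I * p * (u : ℂ) ^ 2 / (2 * (2 / p + I * (u : ℂ) ^ 2)) =
        p / 2 + -1 / (2 / p + I * (u : ℂ) ^ 2) := by
      have : I * (u : ℂ) ^ 2 = (2 / p + I * (u : ℂ) ^ 2) - 2 / p := by ring
      rw [show I * p * (u : ℂ) ^ 2 = p * (I * (u : ℂ) ^ 2) by ring]
      generalize (2 / p + I * (u : ℂ) ^ 2 : ℂ) = D at h0 this
      rw [this]
      field_simp
      ring
    have hsim : 0 < (I * p * (u : ℂ) ^ 2 / (2 * (2 / p + I * (u : ℂ) ^ 2))).im := by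
      rw [hs, neg_div, one_div, add_im, neg_im, inv_im, ← ofReal_natCast, ← ofReal_ofNat,
        ← ofReal_div, ofReal_im, neg_div, neg_neg, zero_add]
      rw [← ofReal_natCast, ← ofReal_ofNat] at him
      refine div_pos (by simpa using him) (normSq_pos.mpr ?_)
      simpa using h0
    have h1 := theta_shift p hsim
    rw [theta_fe (2 / p + _), show -1 / (2 / p + I * (u : ℂ) ^ 2) = -(p : ℂ) / 2 +
      I * p * (u : ℂ) ^ 2 / (2 * (2 / p + I * (u : ℂ) ^ 2)) by rw [hs]; ring, h1]
    push_cast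
    rw [one_mul]
    ring
  have := tendsto_nhds_unique ((theta_left_lim p).congr' e) hR
  rw [hCval] at this
  have hs : ((Real.sqrt p : ℝ) : ℂ) ≠ 0 := by
    exact_mod_cast (Real.sqrt_pos.mpr hpr).ne'
  have hI : (1 - I : ℂ) ≠ 0 := fun h => by
    have := congrArg Complex.re h
    simp at this
  have hI2 : (1 : ℂ) / (1 - I) = (1 + I) / 2 := by
    rw [div_eq_div_iff hI two_ne_zero]
    linear_combination I_sq
  rw [div_eq_iff hp', one_div_div, ← mul_one_div, hI2] at this
  rw [this]
  push_cast
  field_simp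
  ring

lemma qr_sum (p : ℕ) [Fact p.Prime] (hp2 : p ≠ 2) :
    ∑ a : Fin p, cexp (2 * Real.pi * I * (a : ℕ) ^ 2 / p) =
    1 + 2 * ∑ k ∈ (Finset.range p).filter (fun k : ℕ => legendreSym p (k : ℤ) = 1),
        Complex.exp (2 * Real.pi * Complex.I * k / p) := by
  have hp' : (p : ℂ) ≠ 0 := by exact_mod_cast NeZero.ne p
  have per (n : ℕ) : cexp (2 * Real.pi * I * n / p) =
      cexp (2 * Real.pi * I * ((n : ZMod p).val : ℕ) / p) := by
    rw [ZMod.val_natCast, Complex.exp_eq_exp_iff_exists_int]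
    refine ⟨((n / p : ℕ) : ℤ), ?_⟩
    have : (n : ℂ) = (n % p : ℕ) + p * (n / p : ℕ) := by exact_mod_cast (Nat.mod_add_div n p).symm
    rw [this, Int.cast_natCast]
    field_simp
  have inj : Set.InjOn (fun n : ℕ => (n : ZMod p)) (Finset.range p : Finset ℕ) := by
    intro a ha b hb hab
    have := congrArg ZMod.val hab
    simp only [ZMod.val_natCast] at this
    rwa [Nat.mod_eq_of_lt (by simpa using ha), Nat.mod_eq_of_lt (by simpa using hb)] at this
  have tr (f : ZMod p → ℂ) : ∑ a ∈ Finset.range p, f (a : ZMod p) = ∑ x : ZMod p, f x := by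
    rw [← Finset.sum_image (f := f) (g := fun n : ℕ => (n : ZMod p)) inj]
    congr 1
    ext x
    simp only [Finset.mem_image, Finset.mem_range, Finset.mem_univ, iff_true]
    exact ⟨x.val, x.val_lt, by simp⟩
  set ψ : ZMod p → ℂ := fun x => cexp (2 * Real.pi * I * (x.val : ℕ) / p) with hψ
  have h1 : ∑ a : Fin p, cexp (2 * Real.pi * I * (a : ℕ) ^ 2 / p) = ∑ x : ZMod p, ψ (x ^ 2) := by
    rw [Fin.sum_univ_eq_sum_range (fun a : ℕ => cexp (2 * Real.pi * I * (a : ℂ) ^ 2 / p)),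
      ← tr (fun x => ψ (x ^ 2))]
    refine Finset.sum_congr rfl fun a _ => ?_
    have := per (a ^ 2)
    push_cast at this
    exact this
  have h2 : ∑ x : ZMod p, ψ (x ^ 2) = ∑ y : ZMod p, ((quadraticChar (ZMod p) y + 1 : ℤ) : ℂ) * ψ y := by
    rw [← Finset.sum_fiberwise (s := Finset.univ) (g := fun x : ZMod p => x ^ 2)]
    refine Finset.sum_congr rfl fun y _ => ?_
    rw [← quadraticChar_card_sqrts ((ZMod.ringChar_zmod_n p).substr hp2) y]
    rw [Finset.sum_congr rfl (g := fun _ => ψ y) (fun x hx => by rw [(Finset.mem_filter.mp hx).2])]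
    rw [Finset.sum_const, nsmul_eq_mul]
    push_cast
    congr 3
    ext x
    simp
  have h3 : ∑ x : ZMod p, ψ (x ^ 2) = 
      ∑ k ∈ Finset.range p, ((legendreSym p (k : ℤ) + 1 : ℤ) : ℂ) *
        cexp (2 * Real.pi * I * k / p) := by
    rw [h2, ← tr]
    refine Finset.sum_congr rfl fun k _ => ?_
    rw [per k, legendreSym, Int.cast_natCast]
  have h5 (k : ℕ) (hk : k ∈ Finset.range p) : ((legendreSym p (k : ℤ) + 1 : ℤ) : ℂ) *
        cexp (2 * Real.pi * I * k / p) = (if k = 0 then 1 else 0) +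
        2 * (if legendreSym p (k : ℤ) = 1 then cexp (2 * Real.pi * I * k / p) else 0) := by
    rcases Nat.eq_zero_or_pos k with rfl | hk0
    · simp [legendreSym]
    · have hne : ((k : ℤ) : ZMod p) ≠ 0 := by
        intro h
        rw [Int.cast_natCast, ZMod.natCast_eq_zero_iff] at h
        exact absurd (Nat.le_of_dvd hk0 h) (by simpa using hk)
      rcases legendreSym.eq_one_or_neg_one p hne with h | h
      · rw [h]
        simp [hk0.ne']
      · rw [h]
        simp [hk0.ne']
  rw [h1, h3, Finset.sum_congr rfl h5, Finset.sum_add_distrib, ← Finset.mul_sum,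
    Finset.sum_filter]
  congr 1
  simp [NeZero.ne p]

end GaussAux

theorem stmt_3 (p : ℕ) [Fact p.Prime] (hp5 : 5 ≤ p) :
    (∑ k ∈ (Finset.range p).filter (fun k : ℕ => legendreSym p (k : ℤ) = 1),
        Complex.exp (2 * Real.pi * Complex.I * k / p))
      = if p % 4 = 1 then ((-1 + Real.sqrt p) / 2 : ℂ)
        else (-1 + Complex.I * Real.sqrt p) / 2 := by
  have h1 := GaussAux.qr_sum p (by omega)
  rw [GaussAux.gauss p] at h1
  have hodd : p % 2 = 1 := (Fact.out : p.Prime).eq_two_or_odd.resolve_left (by omega)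
  have hpow : (-I) ^ p = (-I) ^ (p % 4) := by
    conv_lhs => rw [← Nat.mod_add_div p 4, pow_add, pow_mul]
    have : (-I) ^ 4 = 1 := by
      rw [neg_pow, I_pow_four]; norm_num
    simp [this]
  rw [hpow] at h1
  split_ifs with h
  · rw [h] at h1
    linear_combination (-1 / 2) * h1 - (Real.sqrt p) / 4 * I_sq
  · have h3 : p % 4 = 3 := by omega
    rw [h3, show (-I) ^ 3 = I by rw [neg_pow, I_pow_three]; norm_num] at h1
    linear_combination (-1 / 2) * h1 + (Real.sqrt p) / 4 * I_sq
end

section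
/- Let $p \geq 5$ be a prime with $p \equiv 3 \pmod 4$, and let $h(p)$ denote the class number of $\mathbb{Q}(\sqrt{-p})$. Then $\sum_{k,\ (k/p)_L=1} \frac{k}{p} = \frac{p-1}{4} - \frac{h(p)}{2}$ and $\sum_{k,\ (k/p)_L=-1} \frac{k}{p} = \frac{p-1}{4} + \frac{h(p)}{2}$, where the sums range over $k \in \{1,\dots,p-1\}$ that are quadratic residues (resp. non-residues) mod $p$. -/
open Finset

namespace CNF

open Polynomial in
lemma T_eq (p : ℕ) [Fact p.Prime] (m : ℕ) (hm : m ≤ p - 1) :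
    ∃ U : (ZMod p)[X], ∑ j ∈ range p, C ((j : ZMod p) ^ m) * X ^ j = (X - 1) ^ (p - 1 - m) * U ∧
      U.eval 1 = (-1) ^ m * (m.factorial : ZMod p) := by
  have hp := (Fact.out : p.Prime)
  induction m with
  | zero =>
    refine ⟨1, ?_, by simp⟩
    have h1 : (∑ j ∈ range p, (X : (ZMod p)[X]) ^ j) * (X - 1) = X ^ p - 1 := geom_sum_mul X p
    have h2 : (X - 1 : (ZMod p)[X]) ^ p = X ^ p - 1 := by
      rw [sub_pow_char, one_pow]
    have h3 : (X - 1 : (ZMod p)[X]) ≠ 0 := by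
      have := X_sub_C_ne_zero (1 : ZMod p); simpa using this
    apply mul_right_cancel₀ h3
    simp only [pow_zero, map_one, one_mul, mul_one, Nat.sub_zero]
    rw [h1, ← h2, ← pow_succ]
    congr 1
    have := hp.pos; omega
  | succ m ih =>
    obtain ⟨U, hU, hU1⟩ := ih (by omega)
    set r := p - 1 - (m + 1) with hr
    have hr' : p - 1 - m = r + 1 := by omega
    rw [hr'] at hU
    refine ⟨X * ((r + 1 : (ZMod p)[X]) * U + (X - 1) * derivative U), ?_, ?_⟩
    · have := congrArg (fun q => X * derivative q) hU
      simp only [derivative_sum, derivative_mul, derivative_C, derivative_X_pow, zero_mul, zero_add, mul_sum] at this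
      have h2 : ∑ j ∈ range p, C ((j : ZMod p) ^ (m+1)) * X ^ j = ∑ i ∈ range p, X * (C ((i : ZMod p) ^ m) * (C (i : ZMod p) * X ^ (i - 1))) := by
        apply sum_congr rfl
        intro j _
        rcases j with _ | j
        · simp
        · simp only [Nat.add_sub_cancel, pow_succ, map_mul]; ring
      rw [h2, this, derivative_pow]
      simp
      ring
    · simp only [eval_mul, eval_X, eval_add, eval_natCast, eval_one, eval_sub, sub_self, zero_mul, add_zero, hU1, one_mul]
      have : ((r : ZMod p) + 1) = -(m + 1) := by
        have h3 : r + 1 + (m + 1) = p := by have := hp.pos; omega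
        have h4 := congrArg (Nat.cast : ℕ → ZMod p) h3
        simp only [Nat.cast_add, CharP.cast_eq_zero, Nat.cast_one] at h4
        linear_combination h4
      rw [this, Nat.factorial_succ]
      push_cast
      ring

open Polynomial in
lemma Q_eq (p : ℕ) [Fact p.Prime] (n : ℕ) (hn : n ≤ p) :
    ∃ R : (ZMod p)[X], ∏ k ∈ Icc 1 n, ((X : (ZMod p)[X]) ^ k - X ^ (p - k)) = (X - 1) ^ n * R ∧
      R.eval 1 = 2 ^ n * (n.factorial : ZMod p) := by
  induction n with
  | zero => exact ⟨1, by simp⟩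
  | succ n ih =>
    obtain ⟨R, hR, hR1⟩ := ih (by omega)
    refine ⟨R * (∑ i ∈ range (n+1), X ^ i - ∑ i ∈ range (p - (n+1)), X ^ i), ?_, ?_⟩
    · rw [prod_Icc_succ_top (by omega), hR]
      have h1 := geom_sum_mul (X : (ZMod p)[X]) (n+1)
      have h2 := geom_sum_mul (X : (ZMod p)[X]) (p - (n+1))
      linear_combination (-(X-1)^n * R) * h1 + (X-1)^n * R * h2
    · simp [eval_finsetSum, hR1, Nat.factorial_succ]
      rw [Nat.cast_sub hn]
      push_cast
      simp
      ring

open Polynomial in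
/-- the sign comparison -/
lemma sign_compare (p : ℕ) [Fact p.Prime] (hp2 : p ≠ 2) (ζ : ℂ) (hζ : IsPrimitiveRoot ζ p) (δ : ℤ)
    (h : ∑ j ∈ range p, ((legendreSym p j : ℤ) : ℂ) * ζ ^ j =
      δ * ∏ k ∈ Icc 1 (p / 2), (ζ ^ k - ζ ^ (p - k))) :
    (-1) ^ (p / 2) = (δ : ZMod p) * 2 ^ (p / 2) := by
  have hp := (Fact.out : p.Prime)
  have hodd : p % 2 = 1 := hp.eq_two_or_odd.resolve_left hp2
  set n := p / 2 with hn
  have hn1 : p = 2 * n + 1 := by omega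
  have hn0 : 0 < n := by have := hp.two_le; omega
  let F : ℤ[X] := ∑ j ∈ range p, C (legendreSym p j) * X ^ j - C δ * ∏ k ∈ Icc 1 n, (X ^ k - X ^ (p - k))
  have hF : aeval ζ F = 0 := by
    simp only [F, map_sub, map_sum, map_mul, map_prod, map_pow, aeval_X, aeval_C]
    simp only [algebraMap_int_eq, eq_intCast]
    rw [h, sub_self]
  have hd : cyclotomic p ℤ ∣ F := by
    rw [cyclotomic_eq_minpoly hζ hp.pos]
    exact minpoly.isIntegrallyClosed_dvd (hζ.isIntegral hp.pos) hF
  have hd2 := map_dvd (mapRingHom (Int.castRingHom (ZMod p))) hd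
  simp only [coe_mapRingHom, map_cyclotomic] at hd2
  rw [cyclotomic_prime] at hd2
  obtain ⟨U0, hU0, -⟩ := T_eq p 0 (by omega)
  have hcyc : ∑ i ∈ range p, (X : (ZMod p)[X]) ^ i = (X - 1) ^ (p - 1) * U0 := by simpa using hU0
  obtain ⟨U, hU, hU1⟩ := T_eq p n (by omega)
  obtain ⟨R, hR, hR1⟩ := Q_eq p n (by omega)
  have hFm : F.map (Int.castRingHom (ZMod p)) = (X - 1) ^ n * (U - C (δ : ZMod p) * R) := by
    have e1 : p - 1 - n = n := by omega
    rw [e1] at hU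
    simp only [F, Polynomial.map_sub, Polynomial.map_sum, Polynomial.map_mul, Polynomial.map_prod, Polynomial.map_pow, map_X, map_C]
    rw [hR, mul_sub, ← hU]
    simp only [eq_intCast]
    congr 1
    · apply sum_congr rfl
      intro j _
      rw [legendreSym.eq_pow]
      simp [hn]
    · ring
  rw [hFm, hcyc] at hd2
  have h3 : (X - 1 : (ZMod p)[X]) ≠ 0 := by
    have := X_sub_C_ne_zero (1 : ZMod p); simpa using this
  have h4 : (X - 1 : (ZMod p)[X]) ^ n ∣ U - C (δ : ZMod p) * R := by
    have h5 : (X - 1 : (ZMod p)[X]) ^ n * (X - 1) ^ n ∣ (X - 1) ^ n * (U - C (δ : ZMod p) * R) := by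
      refine dvd_trans ?_ hd2
      rw [← pow_add, show n + n = p - 1 by omega]
      exact dvd_mul_right _ _
    exact (mul_dvd_mul_iff_left (pow_ne_zero _ h3)).1 h5
  have h5 : (X - 1 : (ZMod p)[X]) ∣ U - C (δ : ZMod p) * R := (dvd_pow_self _ hn0.ne').trans h4
  obtain ⟨W, hW⟩ := h5
  have h6 := congrArg (eval 1) hW
  simp [hU1, hR1] at h6
  have hf : (n.factorial : ZMod p) ≠ 0 := by
    intro h0
    rw [ZMod.natCast_eq_zero_iff, hp.dvd_factorial] at h0
    omega
  apply mul_right_cancel₀ hf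
  linear_combination h6

lemma sin_prod (p : ℕ) (hp : 2 < p) (n : ℕ) (hn : n ≤ p / 2) (hodd : p % 2 = 1) : ∃ r : ℝ, 0 < r ∧
    ∏ k ∈ Icc 1 n, (Complex.exp (2 * Real.pi * Complex.I / p) ^ k - Complex.exp (2 * Real.pi * Complex.I / p) ^ (p - k)) = Complex.I ^ n * r := by
  induction n with
  | zero => exact ⟨1, by simp⟩
  | succ n ih =>
    obtain ⟨r, hr, h⟩ := ih (by omega)
    have hp0 : (p : ℝ) ≠ 0 := by positivity
    have hpc : (p : ℂ) ≠ 0 := by exact_mod_cast hp0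
    have hs : 0 < Real.sin (2 * Real.pi * (n + 1) / p) := by
      apply Real.sin_pos_of_pos_of_lt_pi
      · positivity
      · rw [div_lt_iff₀ (by positivity)]
        have : (2 * (n+1) : ℝ) < p := by
          have : 2 * (n + 1) < p := by omega
          exact_mod_cast this
        nlinarith [Real.pi_pos]
    refine ⟨r * (2 * Real.sin (2 * Real.pi * (n + 1) / p)), by positivity, ?_⟩
    rw [prod_Icc_succ_top (by omega), h]
    have h1 : Complex.exp (2 * Real.pi * Complex.I / p) ^ (n+1) = Complex.exp ((2 * Real.pi * (n + 1) / p) * Complex.I) := by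
      rw [← Complex.exp_nat_mul]; congr 1; push_cast; field_simp
    have h2 : Complex.exp (2 * Real.pi * Complex.I / p) ^ (p - (n+1)) = Complex.exp (-(2 * Real.pi * (n + 1) / p) * Complex.I) := by
      rw [← Complex.exp_nat_mul, Nat.cast_sub (by omega)]
      rw [Complex.exp_eq_exp_iff_exists_int]
      refine ⟨1, ?_⟩
      push_cast
      field_simp
      ring
    rw [h1, h2]
    push_cast
    have h3 := Complex.two_sin (2 * Real.pi * (n + 1) / p : ℂ)
    rw [pow_succ]
    linear_combination (-Complex.I ^ n * Complex.I * r) * h3 - (Complex.I ^ n * r * (Complex.exp (-(2 * Real.pi * (n + 1) / p) * Complex.I) - Complex.exp ((2 * Real.pi * (n + 1) / p) * Complex.I))) * Complex.I_sq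
end CNF

namespace CNF

open Polynomial in
lemma prod_one_sub (n : ℕ) (η : ℂ) (h : IsPrimitiveRoot η (n+1)) :
    ∏ k ∈ Icc 1 n, (1 - η ^ k) = n + 1 := by
  have h1 := X_pow_sub_C_eq_prod (n := n+1) (α := (1:ℂ)) (a := 1) h (by omega) (by simp)
  simp only [mul_one, map_one] at h1
  rw [prod_range_succ', ← geom_sum_mul] at h1
  simp only [pow_zero, map_one] at h1
  have h3 : (X - 1 : ℂ[X]) ≠ 0 := by
    have := X_sub_C_ne_zero (1 : ℂ); simpa using this
  have h2 := mul_right_cancel₀ h3 h1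
  have h4 := congrArg (eval 1) h2
  simp [eval_finsetSum, eval_prod] at h4
  rw [h4, range_eq_Ico, prod_Ico_add' (fun k => 1 - η ^ k) 0 n 1]
  rfl

lemma prod_fold (n : ℕ) (f : ℕ → ℂ) :
    ∏ k ∈ Icc 1 (2 * n), f k = ∏ k ∈ Icc 1 n, (f k * f (2 * n + 1 - k)) := by
  rw [prod_mul_distrib]
  have : Icc 1 (2 * n) = Icc 1 n ∪ Icc (n+1) (2*n) := by ext; simp; omega
  rw [this, prod_union (by rw [disjoint_left]; intro x; simp; omega)]
  congr 1
  apply prod_nbij' (fun k => 2 * n + 1 - k) (fun k => 2 * n + 1 - k)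
  · intro k; simp; omega
  · intro k; simp; omega
  · intro k; simp; omega
  · intro k; simp; omega
  · intro k hk; simp at hk; congr 1; omega

lemma P_sq (n : ℕ) (ζ : ℂ) (h : IsPrimitiveRoot ζ (2*n+1)) :
    (∏ k ∈ Icc 1 n, (ζ ^ k - ζ ^ (2 * n + 1 - k))) ^ 2 = (-1) ^ n * (2 * n + 1) := by
  have h2 : IsPrimitiveRoot (ζ ^ 2) (2 * n + 1) := h.pow_of_coprime 2 (by simp)
  have h3 := prod_one_sub (2*n) (ζ^2) h2
  rw [prod_fold] at h3
  push_cast at h3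
  rw [← h3, ← prod_pow]
  have : (-1 : ℂ) ^ n = ∏ k ∈ Icc 1 n, (-1) := by simp
  rw [this, ← prod_mul_distrib]
  apply prod_congr rfl
  intro k hk
  simp at hk
  have e : ζ ^ k * ζ ^ (2 * n + 1 - k) = 1 := by
    rw [← pow_add, show k + (2 * n + 1 - k) = 2*n+1 by omega, h.pow_eq_one]
  rw [← pow_mul, ← pow_mul, mul_comm 2 k, mul_comm 2 (2 * n + 1 - k), pow_mul, pow_mul]
  generalize ζ ^ k = x at *
  generalize ζ ^ (2 * n + 1 - k) = y at *
  linear_combination (-1 + x * y) * e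

noncomputable def chi (p : ℕ) [Fact p.Prime] : DirichletCharacter ℂ p :=
  (quadraticChar (ZMod p)).ringHomComp (Int.castRingHom ℂ)

lemma chi_apply (p : ℕ) [Fact p.Prime] (a : ℤ) : chi p a = legendreSym p a := by
  simp [chi, legendreSym]

lemma chi_nat (p : ℕ) [Fact p.Prime] (a : ℕ) : chi p a = legendreSym p a := by
  simpa using chi_apply p a

lemma sum_zmod (p : ℕ) [NeZero p] (f : ZMod p → ℂ) : ∑ j, f j = ∑ k ∈ range p, f k := by
  symm
  refine sum_bij' (fun (k : ℕ) _ => (k : ZMod p)) (fun (j : ZMod p) _ => j.val) ?_ ?_ ?_ ?_ ?_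
  · simp
  · intro a _; simp [ZMod.val_lt]
  · intro a ha; simp at ha; exact ZMod.val_cast_of_lt ha
  · simp
  · simp

lemma gauss_eq (p : ℕ) [Fact p.Prime] :
    gaussSum (chi p) (ZMod.stdAddChar (N := p)) = ∑ j ∈ range p, ((legendreSym p j : ℤ) : ℂ) * Complex.exp (2 * Real.pi * Complex.I / p) ^ j := by
  rw [gaussSum, sum_zmod]
  apply sum_congr rfl
  intro j _
  rw [chi_nat]
  congr 1
  have := ZMod.stdAddChar_coe (N := p) j
  push_cast at this
  rw [this, ← Complex.exp_nat_mul]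
  congr 1; ring

lemma chi_ne_one (p : ℕ) [Fact p.Prime] (hp2 : p ≠ 2) : chi p ≠ 1 := by
  have := quadraticChar_ne_one (F := ZMod p) (by rw [ZMod.ringChar_zmod_n]; exact hp2)
  rw [chi, Ne, MulChar.ringHomComp_eq_one_iff (RingHom.injective_int _)]
  exact this

lemma chi_neg_one (p : ℕ) [Fact p.Prime] (hp3 : p % 4 = 3) : chi p (-1) = -1 := by
  have h := chi_apply p (-1)
  have := legendreSym.at_neg_one (p := p) (by omega)
  rw [ZMod.χ₄_nat_three_mod_four hp3] at this
  rw [this] at h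
  simpa using h

lemma gauss_sq (p : ℕ) [Fact p.Prime] (hp3 : p % 4 = 3) :
    gaussSum (chi p) (ZMod.stdAddChar (N := p)) ^ 2 = -p := by
  rw [gaussSum_sq (chi_ne_one p (by omega)) ((quadraticChar_isQuadratic (ZMod p)).comp _) (ZMod.isPrimitive_stdAddChar p), chi_neg_one p hp3]
  simp [ZMod.card]

theorem gauss_val (p : ℕ) [Fact p.Prime] (hp3 : p % 4 = 3) :
    gaussSum (chi p) (ZMod.stdAddChar (N := p)) = Complex.I * (Real.sqrt p : ℝ) := by
  have hp := (Fact.out : p.Prime)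
  have hsq := gauss_sq p hp3
  have hprim := Complex.isPrimitiveRoot_exp p hp.ne_zero
  set n := p / 2 with hn
  have hpn : p = 2 * n + 1 := by omega
  have hP : (∏ k ∈ Icc 1 (p/2), (Complex.exp (2 * Real.pi * Complex.I / p) ^ k - Complex.exp (2 * Real.pi * Complex.I / p) ^ (p - k))) ^ 2 = - (p : ℂ) := by
    have := P_sq n _ (hpn ▸ hprim)
    rw [← hpn] at this
    rw [← hn, this, Odd.neg_one_pow (by rw [Nat.odd_iff]; omega)]
    conv_rhs => rw [hpn]
    push_cast; ring
  obtain ⟨r, hr, hPr⟩ := sin_prod p (by omega) (p / 2) le_rfl (by omega)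
  have hcmp := sign_compare p (by omega) _ hprim
  rw [← gauss_eq] at hcmp
  rw [hPr] at hcmp hP
  rw [← hn] at hcmp hP
  have h2 : (2 : ZMod p) ^ n = ((ZMod.χ₈ p : ℤ) : ZMod p) := by
    have h3 := legendreSym.eq_pow p 2
    rw [legendreSym.at_two (by omega)] at h3
    rw [h3, hn]; norm_num
  rw [ZMod.χ₈_nat_eq_if_mod_eight, if_neg (by omega)] at h2
  rw [h2, Odd.neg_one_pow (by rw [Nat.odd_iff]; omega)] at hcmp
  have hne : (1 : ZMod p) ≠ -1 := by
    intro h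
    haveI : Fact (2 < p) := ⟨by omega⟩
    exact ZMod.neg_one_ne_one (n := p) h.symm
  have hr2 : r ^ 2 = p := by
    have : (r : ℂ) ^ 2 = p := by
      rw [mul_pow, ← pow_mul, mul_comm n 2, pow_mul, Complex.I_sq, Odd.neg_one_pow (by rw [Nat.odd_iff]; omega)] at hP
      linear_combination -hP
    exact_mod_cast this
  have hr3 : r = Real.sqrt p := by rw [← hr2, Real.sqrt_sq hr.le]
  have hτ : gaussSum (chi p) (ZMod.stdAddChar (N := p)) = Complex.I ^ n * r ∨ gaussSum (chi p) (ZMod.stdAddChar (N := p)) = -(Complex.I ^ n * r) := by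
    rw [← sq_eq_sq_iff_eq_or_eq_neg, hsq, hP]
  rw [← hr3]
  rcases (show p % 8 = 3 ∨ p % 8 = 7 by omega) with h8 | h8
  · have hI : Complex.I ^ n = Complex.I := by
      rw [← Nat.div_add_mod n 4, show n % 4 = 1 by omega, pow_add, pow_mul, Complex.I_pow_four]; simp
    rw [hI] at hτ hcmp
    rcases hτ with h | h
    · exact h
    · exfalso
      have := hcmp (-1) (by rw [h]; push_cast; ring)
      rw [if_neg (by omega)] at this
      push_cast at this
      exact hne (by linear_combination -this)
  · have hI : Complex.I ^ n = -Complex.I := by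
      rw [← Nat.div_add_mod n 4, show n % 4 = 3 by omega, pow_add, pow_mul, Complex.I_pow_four]; simp
    rw [hI] at hτ hcmp
    rcases hτ with h | h
    · exfalso
      have := hcmp 1 (by rw [h]; push_cast; ring)
      rw [if_pos (by omega)] at this
      push_cast at this
      exact hne (by linear_combination -this)
    · rw [h]; ring
end CNF

namespace CNF
open Filter Topology

lemma rpow_diff_bound (m x y s : ℝ) (hm : 0 < m) (hx : m ≤ x) (hy : m ≤ y) (hs1 : 1 ≤ s) (hs2 : s ≤ 2) :
    |x ^ (-s) - y ^ (-s)| ≤ 2 * m ^ (-s - 1) * |x - y| := by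
  have := (convex_Ici m).norm_image_sub_le_of_norm_hasDerivWithin_le (f := fun t : ℝ => t ^ (-s))
    (f' := fun t => -s * t ^ (-s - 1)) (C := 2 * m ^ (-s - 1)) (x := y) (y := x) ?_ ?_ hy hx
  · simpa using this
  · intro t ht
    have ht0 : 0 < t := lt_of_lt_of_le hm ht
    exact (Real.hasDerivAt_rpow_const (Or.inl ht0.ne')).hasDerivWithinAt
  · intro t ht
    have ht0 : 0 < t := lt_of_lt_of_le hm ht
    rw [norm_mul, Real.norm_eq_abs, Real.norm_eq_abs, abs_neg, abs_of_pos (by linarith), abs_of_pos (by positivity)]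
    apply mul_le_mul hs2 _ (by positivity) (by norm_num)
    exact Real.rpow_le_rpow_of_nonpos hm ht (by linarith)

lemma term_bound (a s : ℝ) (ha : 0 < a) (ha1 : a < 1) (hs1 : 1 ≤ s) (hs2 : s ≤ 2) (n : ℕ) :
    |(n + a) ^ (-s) - (n + 1 - a) ^ (-s)| ≤ 2 * (min a (1-a)) ^ (-3 : ℝ) * (1 / ((n : ℝ) + 1) ^ 2) := by
  set c := min a (1 - a) with hc
  have hc0 : 0 < c := lt_min ha (by linarith)
  have hca : c ≤ a := min_le_left _ _
  have hcb : c ≤ 1 - a := min_le_right _ _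
  have hc1 : c ≤ 1 := by linarith
  have hn : (0 : ℝ) ≤ n := Nat.cast_nonneg n
  have hm : c * (n + 1) ≤ n + c := by nlinarith
  have h := rpow_diff_bound (c * (n+1)) (n + a) (n + 1 - a) s (by positivity) (by linarith) (by linarith) hs1 hs2
  refine h.trans ?_
  have h1 : |(n : ℝ) + a - (n + 1 - a)| ≤ 1 := by rw [abs_le]; constructor <;> linarith
  have h2 : (c * (n + 1)) ^ (-s - 1) ≤ c ^ (-3 : ℝ) * (1 / ((n : ℝ) + 1) ^ 2) := by
    rw [Real.mul_rpow hc0.le (by positivity)]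
    apply mul_le_mul
    · exact Real.rpow_le_rpow_of_exponent_ge hc0 hc1 (by linarith)
    · have : (1 / ((n : ℝ) + 1) ^ 2) = ((n : ℝ) + 1) ^ (-2 : ℝ) := by
        rw [Real.rpow_neg (by positivity)]; norm_num
      rw [this]
      exact Real.rpow_le_rpow_of_exponent_le (by linarith) (by linarith)
    · positivity
    · positivity
  calc 2 * (c * (n + 1)) ^ (-s - 1) * |(n : ℝ) + a - (n + 1 - a)| ≤ 2 * (c * (n + 1)) ^ (-s - 1) * 1 := by gcongr
    _ ≤ _ := by rw [mul_one, mul_assoc]; gcongr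

lemma summable_bound (c : ℝ) : Summable (fun n : ℕ => c * (1 / ((n : ℝ) + 1) ^ 2)) := by
  apply Summable.mul_left
  have := (summable_nat_add_iff 1).2 (Real.summable_one_div_nat_pow (p := 2) |>.2 (by norm_num))
  simpa using this

lemma tsum_cot (a : ℝ) (ha : 0 < a) (ha1 : a < 1) :
    ∑' n : ℕ, ((n + a) ^ (-(1:ℝ)) - (n + 1 - a) ^ (-(1:ℝ))) = Real.pi * Real.cot (Real.pi * a) := by
  have hs : Summable (fun n : ℕ => ((n + a) ^ (-(1:ℝ)) - (n + 1 - a) ^ (-(1:ℝ)))) := by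
    apply Summable.of_norm_bounded (summable_bound _)
    intro n
    exact term_bound a 1 ha ha1 le_rfl (by norm_num) n
  have hmem : (a : ℂ) ∈ Complex.integerComplement := by
    rintro ⟨n, hn⟩
    have hn' : (n : ℝ) = a := by exact_mod_cast hn
    have h1 : 0 < n := by exact_mod_cast (hn' ▸ ha : (0:ℝ) < n)
    have h2 : n < 1 := by exact_mod_cast (hn' ▸ ha1 : (n:ℝ) < 1)
    omega
  have h1 := tendsto_logDeriv_euler_cot_sub hmem
  have h2 := hs.hasSum.tendsto_sum_nat
  have h3 : Tendsto (fun N : ℕ => (1 / a - 1 / (a + N) : ℝ)) atTop (𝓝 (1 / a - 0)) := by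
    apply Tendsto.sub tendsto_const_nhds
    apply Tendsto.div_atTop tendsto_const_nhds
    exact tendsto_atTop_add_const_left _ _ tendsto_natCast_atTop_atTop
  have h4 : ∀ N : ℕ, ((∑ n ∈ range N, ((n + a) ^ (-(1:ℝ)) - (n + 1 - a) ^ (-(1:ℝ))) : ℝ) : ℂ) =
      ∑ j ∈ range N, cotTerm a j + ((1 / a - 1 / (a + N) : ℝ) : ℂ) := by
    intro N
    induction N with
    | zero => simp
    | succ N ih =>
      rw [sum_range_succ, sum_range_succ, Complex.ofReal_add, ih]
      simp only [cotTerm, Real.rpow_neg_one]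
      have e1 : (N : ℂ) + 1 - a ≠ 0 := by
        have : (N : ℝ) + 1 - a ≠ 0 := by have : (0:ℝ) ≤ N := Nat.cast_nonneg N
                                         linarith
        exact_mod_cast this
      have e2 : (a : ℂ) - (N + 1) ≠ 0 := by rw [← neg_ne_zero]; convert e1 using 1; ring
      have e3 : (1 : ℂ) / (a - (N + 1)) = - (N + 1 - a : ℂ)⁻¹ := by
        rw [← inv_neg, one_div]; congr 1; ring
      push_cast
      rw [e3]
      rw [add_comm (N : ℂ) (a : ℂ)]
      ring
  have h5 := (Complex.continuous_ofReal.tendsto _).comp h2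
  have h6 := h1.add ((Complex.continuous_ofReal.tendsto _).comp h3)
  have h7 := tendsto_nhds_unique h5 (h6.congr (fun N => (h4 N).symm))
  rw [← Complex.ofReal_inj, h7]
  push_cast
  ring

open HurwitzZeta in
lemma hurwitzOdd_one (a : ℝ) (ha : 0 < a) (ha1 : a < 1) :
    hurwitzZetaOdd (a : UnitAddCircle) 1 = ((Real.pi * Real.cot (Real.pi * a) / 2 : ℝ) : ℂ) := by
  have h1 : Tendsto (fun s : ℝ => hurwitzZetaOdd (a : UnitAddCircle) (s : ℂ)) (𝓝[>] 1) (𝓝 (hurwitzZetaOdd (a : UnitAddCircle) 1)) := by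
    have := ((differentiable_hurwitzZetaOdd (a : UnitAddCircle)).continuous.comp Complex.continuous_ofReal).tendsto 1
    simp only [Function.comp_def, Complex.ofReal_one] at this
    exact this.mono_left nhdsWithin_le_nhds
  have h2 : Tendsto (fun s : ℝ => ∑' n : ℕ, (((n : ℝ) + a) ^ (-s) - (n + 1 - a) ^ (-s))) (𝓝[>] 1) (𝓝 (∑' n : ℕ, (((n : ℝ) + a) ^ (-(1:ℝ)) - (n + 1 - a) ^ (-(1:ℝ))))) := by
    apply tendsto_tsum_of_dominated_convergence (summable_bound (2 * (min a (1-a)) ^ (-3 : ℝ)))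
    · intro n
      have hn : (0 : ℝ) ≤ n := Nat.cast_nonneg n
      have c1 : ContinuousAt (fun s : ℝ => ((n : ℝ) + a) ^ (-s)) 1 :=
        ContinuousAt.rpow continuousAt_const continuousAt_id.neg (Or.inl (by positivity))
      have c2 : ContinuousAt (fun s : ℝ => ((n : ℝ) + 1 - a) ^ (-s)) 1 :=
        ContinuousAt.rpow continuousAt_const continuousAt_id.neg (Or.inl (by linarith))
      exact (c1.sub c2).tendsto.mono_left nhdsWithin_le_nhds
    · have : Set.Ioo (1:ℝ) 2 ∈ 𝓝[>] (1:ℝ) := Ioo_mem_nhdsGT (by norm_num)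
      filter_upwards [this] with s hs n
      exact term_bound a s ha ha1 hs.1.le hs.2.le n
  rw [tsum_cot a ha ha1] at h2
  refine tendsto_nhds_unique h1 (((Complex.continuous_ofReal.tendsto _).comp (h2.div_const 2)).congr' ?_)
  filter_upwards [self_mem_nhdsWithin] with s hs
  have hs' : 1 < (s : ℂ).re := by simpa using hs
  rw [← (hasSum_nat_hurwitzZetaOdd_of_mem_Icc (a := a) ⟨ha.le, ha1.le⟩ hs').tsum_eq]
  simp only [Function.comp]
  rw [← tsum_div_const, Complex.ofReal_tsum]
  congr 1
  ext n
  have hn : (0 : ℝ) ≤ n := Nat.cast_nonneg n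
  push_cast
  rw [Complex.ofReal_cpow (by positivity), Complex.ofReal_cpow (by linarith)]
  push_cast
  rw [Complex.cpow_neg, Complex.cpow_neg]
  simp
end CNF

namespace CNF
open Filter Topology

lemma sum_j_pow (z : ℂ) (n : ℕ) : (z - 1) * ∑ j ∈ range n, (j : ℂ) * z ^ j = n * z ^ n - z * ∑ j ∈ range n, z ^ j := by
  induction n with
  | zero => simp
  | succ n ih =>
    rw [sum_range_succ, sum_range_succ, mul_add, ih]; push_cast; ring

lemma sum_j_root (z : ℂ) (n : ℕ) (h : z ^ n = 1) (h1 : z ≠ 1) :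
    (z - 1) * ∑ j ∈ range n, (j : ℂ) * z ^ j = n := by
  have h2 := sub_ne_zero.2 h1
  have h3 := geom_sum_mul z n
  rw [h, sub_self] at h3
  have h4 := (mul_eq_zero.1 h3).resolve_right h2
  rw [sum_j_pow, h4, h]; simp

lemma cot_fourier (p : ℕ) [Fact p.Prime] (k : ℕ) (hk : 0 < k) (hkp : k < p) :
    (p : ℂ) * (Real.cot (Real.pi * (k / p : ℝ)) : ℝ) =
      Complex.I * (p + 2 * ∑ j ∈ range p, (j : ℂ) * ZMod.stdAddChar (N := p) (j * k)) := by
  have hp := (Fact.out : p.Prime)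
  have hpc : (p : ℂ) ≠ 0 := by exact_mod_cast hp.ne_zero
  set z := ZMod.stdAddChar (N := p) (k : ZMod p) with hz
  have hz1 : z = Complex.exp (2 * Real.pi * Complex.I * (k / p)) := by
    have := ZMod.stdAddChar_coe (N := p) k
    push_cast at this
    rw [hz, this]; congr 1; ring
  have hj : ∀ j : ℕ, ZMod.stdAddChar (N := p) (j * k) = z ^ j := by
    intro j
    rw [hz, ← AddChar.map_nsmul_eq_pow]; simp
  have hzne : z ≠ 1 := by
    rw [hz, ← AddChar.map_zero_eq_one (ZMod.stdAddChar (N := p))]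
    intro h
    have h := ZMod.injective_stdAddChar h
    rw [ZMod.natCast_eq_zero_iff] at h
    exact absurd (Nat.le_of_dvd hk h) (by omega)
  have hzp : z ^ p = 1 := by rw [← hj]; simp
  have h1 := sum_j_root z p hzp hzne
  simp only [hj]
  have hcot : ((Real.cot (Real.pi * (k / p : ℝ)) : ℝ) : ℂ) = (z + 1) / (Complex.I * (1 - z)) := by
    rw [hz1, ← Complex.cot_pi_eq_exp_ratio]; push_cast; rfl
  rw [hcot]
  have h2 : (1 - z) ≠ 0 := sub_ne_zero.2 hzne.symm
  rw [← mul_div_assoc, div_eq_iff (mul_ne_zero Complex.I_ne_zero h2)]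
  generalize ∑ j ∈ range p, (j : ℂ) * z ^ j = S at *
  linear_combination (-2 : ℂ) * h1 + (- (p : ℂ) * (1 - z) - 2 * S * (1-z)) * Complex.I_sq

lemma shifted (p : ℕ) [Fact p.Prime] (j : ℕ) (hj : j < p) (h0 : 0 < j) :
    ∑ k ∈ range p, chi p k * ZMod.stdAddChar (N := p) (j * k) = chi p j * gaussSum (chi p) (ZMod.stdAddChar (N := p)) := by
  have hne : (j : ZMod p) ≠ 0 := by
    intro h
    rw [ZMod.natCast_eq_zero_iff] at h
    exact absurd (Nat.le_of_dvd h0 h) (by omega)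
  have h1 := gaussSum_mulShift (chi p) (ZMod.stdAddChar (N := p)) (Units.mk0 _ hne)
  rw [Units.val_mk0] at h1
  rw [← h1, ← mul_assoc]
  have h2 : chi p j * chi p j = 1 := by
    have := legendreSym.sq_one p (a := j) (by simpa using hne)
    rw [chi_nat, ← sq]
    exact_mod_cast this
  rw [h2, one_mul, gaussSum, sum_zmod]
  simp

lemma L_one (p : ℕ) [Fact p.Prime] (hp3 : p % 4 = 3) :
    DirichletCharacter.LFunction (chi p) 1 =
     ((Real.pi / Real.sqrt p * (-(1 / p) * ∑ k ∈ range p, (legendreSym p k : ℝ) * k) : ℝ) : ℂ) := by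
  have hp := (Fact.out : p.Prime)
  have hpc : (p : ℂ) ≠ 0 := by exact_mod_cast hp.ne_zero
  have hodd : Function.Odd (chi p) := by
    intro x
    rw [← neg_one_mul, map_mul, chi_neg_one p hp3]; ring
  rw [DirichletCharacter.LFunction, ZMod.LFunction_def_odd hodd, sum_zmod]
  have hterm : ∀ k ∈ range p, chi p k * HurwitzZeta.hurwitzZetaOdd (ZMod.toAddCircle (k : ZMod p)) 1 =
     Real.pi / (2 * p) * (chi p k * (Complex.I * (p + 2 * ∑ j ∈ range p, (j : ℂ) * ZMod.stdAddChar (N := p) (j * k)))) := by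
    intro k hk
    rw [mem_range] at hk
    rcases Nat.eq_zero_or_pos k with rfl | h0
    · have h00 : chi p 0 = 0 := by
        have := chi_nat p 0
        simpa using this
      simp [h00]
    have hk' : (k : ℝ) < p := by exact_mod_cast hk
    have hk0 : (0 : ℝ) < k := by exact_mod_cast h0
    have hp0 : (0 : ℝ) < p := by linarith
    rw [ZMod.toAddCircle_natCast, hurwitzOdd_one _ (div_pos hk0 hp0) (by rw [div_lt_one hp0]; exact hk'),
      ← cot_fourier p k h0 hk]
    push_cast
    field_simp
  rw [sum_congr rfl hterm, ← mul_sum]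
  have hsum0 : ∑ k ∈ range p, chi p k = 0 := by
    rw [← sum_zmod p (fun x => chi p x)]
    exact MulChar.sum_eq_zero_of_ne_one (chi_ne_one p (by omega))
  have h2 : ∑ k ∈ range p, (chi p k * (Complex.I * (p + 2 * ∑ j ∈ range p, (j : ℂ) * ZMod.stdAddChar (N := p) (j * k)))) =
     2 * Complex.I * ∑ j ∈ range p, (j : ℂ) * (∑ k ∈ range p, chi p k * ZMod.stdAddChar (N := p) (j * k)) := by
    have : ∀ k ∈ range p, (chi p k * (Complex.I * (p + 2 * ∑ j ∈ range p, (j : ℂ) * ZMod.stdAddChar (N := p) (j * k)))) = 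
      Complex.I * p * chi p k + 2 * Complex.I * ∑ j ∈ range p, (j : ℂ) * (chi p k * ZMod.stdAddChar (N := p) (j * k)) := by
      intro k _
      have : ∑ j ∈ range p, (j : ℂ) * (chi p k * ZMod.stdAddChar (N := p) (j * k)) = chi p k * ∑ j ∈ range p, (j : ℂ) * ZMod.stdAddChar (N := p) (j * k) := by
        rw [mul_sum]; apply sum_congr rfl; intro j _; ring
      rw [this]; ring
    rw [sum_congr rfl this, sum_add_distrib, ← mul_sum, hsum0, mul_zero, zero_add, ← mul_sum, sum_comm]
    simp only [mul_sum]
  rw [h2]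
  have h3 : ∑ j ∈ range p, (j : ℂ) * (∑ k ∈ range p, chi p k * ZMod.stdAddChar (N := p) (j * k)) =
      (∑ j ∈ range p, (legendreSym p j : ℂ) * j) * (Complex.I * (Real.sqrt p : ℝ)) := by
    rw [sum_mul]
    apply sum_congr rfl
    intro j hj
    rw [mem_range] at hj
    rcases Nat.eq_zero_or_pos j with rfl | h0
    · simp
    rw [shifted p j hj h0, gauss_val p hp3, chi_nat]
    ring
  rw [h3, Complex.cpow_neg_one]
  push_cast
  have hs : ((Real.sqrt p : ℝ) : ℂ) * (Real.sqrt p : ℝ) = p := by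
    rw [← Complex.ofReal_mul, Real.mul_self_sqrt (by positivity)]; simp
  have hs0 : ((Real.sqrt p : ℝ) : ℂ) ≠ 0 := by
    intro h; rw [h] at hs; simp at hs; exact hpc hs.symm
  generalize ∑ j ∈ range p, (legendreSym p j : ℂ) * (j : ℂ) = S
  rw [← hs]
  field_simp
  rw [Complex.I_sq]
  ring
end CNF

namespace CNF
open NumberField

lemma rat_int {K : Type*} [Field K] [NumberField K] (a : ℚ) (h : IsIntegral ℤ (a : K)) : ∃ A : ℤ, (A : ℚ) = a := by
  have h1 : IsIntegral ℤ (algebraMap ℚ K a) := by simpa using h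
  rw [isIntegral_algebraMap_iff (algebraMap ℚ K).injective] at h1
  obtain ⟨A, hA⟩ := IsIntegrallyClosed.isIntegral_iff.mp h1
  exact ⟨A, by simpa using hA⟩

lemma K_inj (p : ℕ) (hp : p.Prime) {K : Type*} [Field K] [NumberField K]
    (α : K) (hα : α ^ 2 = -(p : K)) (a b : ℚ) (h : (a : K) + b * α = 0) : a = 0 ∧ b = 0 := by
  have h1 : (a : K) ^ 2 + p * b ^ 2 = 0 := by
    have : (a : K) = - (b * α) := by linear_combination h
    rw [this]
    linear_combination (b : K) ^ 2 * hα
  have h2 : a ^ 2 + p * b ^ 2 = 0 := by exact_mod_cast h1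
  have hp0 : (0 : ℚ) < p := by exact_mod_cast hp.pos
  have hb : b = 0 := by
    by_contra hb
    have : 0 < b ^ 2 := by positivity
    nlinarith [mul_pos hp0 this, sq_nonneg a]
  subst hb
  refine ⟨?_, rfl⟩
  simpa using h2

lemma K_rep (p : ℕ) {K : Type*} [Field K] [NumberField K]
    (α : K) (hα : α ^ 2 = -(p : K)) (hgen : Algebra.adjoin ℚ {α} = ⊤) (x : K) :
    ∃ a b : ℚ, x = a + b * α := by
  have hx : x ∈ Algebra.adjoin ℚ {α} := by rw [hgen]; trivial
  induction hx using Algebra.adjoin_induction with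
  | mem x hx => exact ⟨0, 1, by simp at hx; simp [hx]⟩
  | algebraMap r => exact ⟨r, 0, by simp⟩
  | add x y _ _ hx hy =>
    obtain ⟨a, b, rfl⟩ := hx
    obtain ⟨c, d, rfl⟩ := hy
    exact ⟨a + c, b + d, by push_cast; ring⟩
  | mul x y _ _ hx hy =>
    obtain ⟨a, b, rfl⟩ := hx
    obtain ⟨c, d, rfl⟩ := hy
    exact ⟨a * c - p * b * d, a * d + b * c, by push_cast; linear_combination (b : K) * d * hα⟩

lemma exists_conj (p : ℕ) (hp : p.Prime) {K : Type*} [Field K] [NumberField K]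
    (α : K) (hα : α ^ 2 = -(p : K)) (hgen : Algebra.adjoin ℚ {α} = ⊤) :
    ∃ σ : K →ₐ[ℚ] K, σ α = -α := by
  let f : QuadraticAlgebra ℚ (-p) 0 →ₐ[ℚ] K := QuadraticAlgebra.lift ⟨α, by
    simp [Algebra.smul_def]; linear_combination hα⟩
  let g : QuadraticAlgebra ℚ (-p) 0 →ₐ[ℚ] K := QuadraticAlgebra.lift ⟨-α, by
    simp [Algebra.smul_def]; linear_combination hα⟩
  have hf : ∀ z, f z = (z.re : K) + z.im * α := by
    intro z; simp [f, QuadraticAlgebra.lift, Algebra.smul_def]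
  have hg : ∀ z, g z = (z.re : K) + z.im * (-α) := by
    intro z; simp [g, QuadraticAlgebra.lift, Algebra.smul_def]
  have hb : Function.Bijective f := by
    constructor
    · rw [injective_iff_map_eq_zero]
      intro z hz
      rw [hf] at hz
      obtain ⟨h1, h2⟩ := K_inj p hp α hα _ _ hz
      ext <;> simp [h1, h2]
    · intro x
      obtain ⟨a, b, rfl⟩ := K_rep p α hα hgen x
      exact ⟨⟨a, b⟩, by rw [hf]⟩
  let e := AlgEquiv.ofBijective f hb
  refine ⟨g.comp e.symm.toAlgHom, ?_⟩
  have h1 : e.symm α = ⟨0, 1⟩ := by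
    rw [AlgEquiv.symm_apply_eq]
    change α = f _
    rw [hf]; simp
  change g (e.symm α) = _
  rw [h1, hg]; simp

lemma int_rep (p : ℕ) (hp : p.Prime) (hp3 : p % 4 = 3) {K : Type*} [Field K] [NumberField K]
    (α : K) (hα : α ^ 2 = -(p : K)) (hgen : Algebra.adjoin ℚ {α} = ⊤) (x : K) (hx : IsIntegral ℤ x) :
    ∃ u v : ℤ, x = u + v * ((1 + α) / 2) := by
  obtain ⟨a, b, rfl⟩ := K_rep p α hα hgen x
  obtain ⟨σ, hσ⟩ := exists_conj p hp α hα hgen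
  have hy : IsIntegral ℤ (σ ((a : K) + b * α)) := hx.map (σ.restrictScalars ℤ)
  have hσx : σ ((a : K) + b * α) = a - b * α := by
    simp [hσ]; ring
  rw [hσx] at hy
  have hαi : IsIntegral ℤ α := by
    refine ⟨Polynomial.X ^ 2 + Polynomial.C (p : ℤ), Polynomial.monic_X_pow_add_C _ (by norm_num), ?_⟩
    simp [hα]
  obtain ⟨A, hA⟩ := rat_int (K := K) (2 * a) (by
    have h0 : ((2 * a : ℚ) : K) = (a + b * α) + (a - b * α) := by push_cast; ring
    rw [h0]; exact hx.add hy)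
  obtain ⟨N, hN⟩ := rat_int (K := K) (a ^ 2 + p * b ^ 2) (by
    have h0 : ((a ^ 2 + p * b ^ 2 : ℚ) : K) = (a + b * α) * (a - b * α) := by
      push_cast; linear_combination (b : K) ^ 2 * hα
    rw [h0]; exact hx.mul hy)
  obtain ⟨C, hC⟩ := rat_int (K := K) (2 * p * b) (by
    have h0 : ((2 * p * b : ℚ) : K) = -(((a + b * α) - (a - b * α)) * α) := by
      push_cast; linear_combination (2 * b : K) * hα
    rw [h0]; exact ((hx.sub hy).mul hαi).neg)
  have h1 : C ^ 2 = p * (4 * N - A ^ 2) := by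
    have : (C : ℚ) ^ 2 = p * (4 * N - A ^ 2) := by rw [hC, hN, hA]; ring
    exact_mod_cast this
  have hpz : Prime (p : ℤ) := Nat.prime_iff_prime_int.mp hp
  obtain ⟨B, hB⟩ : (p : ℤ) ∣ C := hpz.dvd_of_dvd_pow (n := 2) ⟨_, h1⟩
  have hp0 : (p : ℚ) ≠ 0 := by exact_mod_cast hp.ne_zero
  have hB2 : (B : ℚ) = 2 * b := by
    have : (C : ℚ) = p * B := by exact_mod_cast hB
    rw [hC] at this
    apply mul_left_cancel₀ hp0
    linear_combination -this
  have h2 : A ^ 2 + p * B ^ 2 = 4 * N := by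
    have : (A : ℚ) ^ 2 + p * B ^ 2 = 4 * N := by rw [hA, hB2, hN]; ring
    exact_mod_cast this
  have h3 : (2 : ℤ) ∣ A - B := by
    have hp4 : (p : ℤ) = 4 * ((p / 4 : ℕ) : ℤ) + 3 := by omega
    rw [hp4] at h2
    generalize ((p / 4 : ℕ) : ℤ) = t at h2
    have h5 : Even (A ^ 2 - B ^ 2) := by
      refine ⟨2 * N - 2 * t * B ^ 2 - 2 * B ^ 2, by linear_combination h2⟩
    rw [Int.even_sub] at h5
    simp only [Int.even_pow, ne_eq, OfNat.ofNat_ne_zero, not_false_eq_true, and_true] at h5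
    exact (Int.even_sub.mpr h5).two_dvd
  obtain ⟨u, hu⟩ := h3
  refine ⟨u, B, ?_⟩
  have ha : a = A / 2 := by rw [hA]; ring
  have hb : b = B / 2 := by rw [hB2]; ring
  have hA' : A = B + 2 * u := by linarith
  rw [ha, hb, hA']; push_cast; ring

lemma exists_equiv (p : ℕ) (hp : p.Prime) (m : ℤ) (hm : (p : ℤ) + 1 = 4 * m) {K : Type*} [Field K] [NumberField K]
    (α : K) (hα : α ^ 2 = -(p : K)) (hgen : Algebra.adjoin ℚ {α} = ⊤) :
    Nonempty (QuadraticAlgebra ℤ (-m) 1 ≃ₐ[ℤ] 𝓞 K) := by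
  have hmK : (p : K) + 1 = 4 * m := by exact_mod_cast congrArg (Int.cast : ℤ → K) hm
  have hθe : ((1 + α) / 2) ^ 2 = (1 + α) / 2 - (m : K) := by
    linear_combination hα / 4 - hmK / 4
  have hθi : IsIntegral ℤ ((1 + α) / 2) := by
    refine ⟨Polynomial.X ^ 2 - Polynomial.X + Polynomial.C m, ?_, ?_⟩
    · monicity!
    · simp only [Polynomial.eval₂_add, Polynomial.eval₂_sub, Polynomial.eval₂_X_pow, Polynomial.eval₂_X, Polynomial.eval₂_C, hθe]
      simp
  let θ : 𝓞 K := ⟨(1 + α) / 2, hθi⟩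
  have hθ : (θ : K) = (1 + α) / 2 := rfl
  let f : QuadraticAlgebra ℤ (-m) 1 →ₐ[ℤ] 𝓞 K := QuadraticAlgebra.lift ⟨θ, by
    apply RingOfIntegers.coe_injective
    simp [hθ]; linear_combination hθe⟩
  have hf : ∀ z, (f z : K) = (z.re : K) + z.im * ((1 + α) / 2) := by
    intro z; simp [f, QuadraticAlgebra.lift, hθ]
  refine ⟨AlgEquiv.ofBijective f ⟨?_, ?_⟩⟩
  · rw [injective_iff_map_eq_zero]
    intro z hz
    have hz2 : (f z : K) = 0 := by rw [hz]; simp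
    rw [hf] at hz2
    obtain ⟨h1, h2⟩ := K_inj p hp α hα (z.re + z.im / 2) (z.im / 2) (by push_cast; linear_combination hz2)
    have h3 : (z.im : ℚ) = 0 := by linarith
    have h4 : (z.re : ℚ) = 0 := by linarith
    ext
    · simpa using h4
    · simpa using h3
  · intro x
    obtain ⟨u, v, h⟩ := int_rep p hp (by omega) α hα hgen (x : K) (RingOfIntegers.isIntegral_coe x)
    refine ⟨⟨u, v⟩, ?_⟩
    apply RingOfIntegers.coe_injective
    exact (hf _).trans h.symm
end CNF

namespace CNF
open NumberField

section
variable {K : Type*} [Field K] [NumberField K] {m : ℤ}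
  (e : QuadraticAlgebra ℤ (-m) 1 ≃ₐ[ℤ] 𝓞 K)

lemma finrank_int (e : QuadraticAlgebra ℤ (-m) 1 ≃ₐ[ℤ] 𝓞 K) : Module.finrank ℤ (𝓞 K) = 2 := by
  rw [← e.toLinearEquiv.finrank_eq, QuadraticAlgebra.finrank_eq_two]

lemma finrank_K (e : QuadraticAlgebra ℤ (-m) 1 ≃ₐ[ℤ] 𝓞 K) : Module.finrank ℚ K = 2 := by
  rw [← RingOfIntegers.rank, finrank_int e]

lemma norm_eq (z : QuadraticAlgebra ℤ (-m) 1) :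
    4 * z.norm = (2 * z.re + z.im) ^ 2 + (4 * m - 1) * z.im ^ 2 := by
  rw [QuadraticAlgebra.norm_def]; ring

lemma units_eq (e : QuadraticAlgebra ℤ (-m) 1 ≃ₐ[ℤ] 𝓞 K) (hm : 2 ≤ m) (u : (𝓞 K)ˣ) : u = 1 ∨ u = -1 := by
  have h1 : IsUnit (e.symm (u : 𝓞 K)) := u.isUnit.map e.symm
  obtain ⟨z, hz⟩ : ∃ z, e.symm (u : 𝓞 K) = z := ⟨_, rfl⟩
  have hu : (u : 𝓞 K) = e z := by rw [← hz]; simp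
  rw [hz, QuadraticAlgebra.isUnit_iff_norm_isUnit, Int.isUnit_iff] at h1
  have h2 := norm_eq z
  have him : z.im = 0 := by
    by_contra hne
    have : 1 ≤ z.im ^ 2 := by
      have : 0 < z.im ^ 2 := by positivity
      omega
    rcases h1 with h1 | h1 <;> rw [h1] at h2 <;> nlinarith [sq_nonneg (2 * z.re + z.im)]
  rw [him] at h2
  have hre : z.re = 1 ∨ z.re = -1 := by
    have : z.re ^ 2 = 1 := by
      rcases h1 with h1 | h1 <;> rw [h1] at h2 <;> nlinarith
    rcases (sq_eq_sq_iff_eq_or_eq_neg).mp (this.trans (one_pow 2).symm) with h | h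
    · exact Or.inl h
    · exact Or.inr h
  rcases hre with h | h
  · left
    have : z = 1 := by ext <;> simp [h, him, QuadraticAlgebra.re_one, QuadraticAlgebra.im_one]
    ext; rw [hu, this]; simp
  · right
    have : z = -1 := by ext <;> simp [h, him, QuadraticAlgebra.re_one, QuadraticAlgebra.im_one]
    ext; rw [hu, this]; simp

lemma torsion_two (e : QuadraticAlgebra ℤ (-m) 1 ≃ₐ[ℤ] 𝓞 K) (hm : 2 ≤ m) : Units.torsionOrder K = 2 := by
  rw [Units.torsionOrder, Nat.card_eq_two_iff]
  refine ⟨1, ⟨-1, ?_⟩, ?_, ?_⟩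
  · rw [Units.torsion, CommGroup.mem_torsion, isOfFinOrder_iff_pow_eq_one]
    exact ⟨2, by norm_num, by simp⟩
  · intro h
    have h1 : (1 : (𝓞 K)ˣ) = -1 := congrArg Subtype.val h
    have h2 : (1 : 𝓞 K) = -1 := by simpa using congrArg (Units.val) h1
    have h3 : (2 : 𝓞 K) = 0 := by linear_combination h2
    exact two_ne_zero h3
  · ext ⟨x, hx⟩
    simp only [Set.mem_insert_iff, Set.mem_singleton_iff, Set.mem_univ, iff_true]
    rcases units_eq e hm x with h | h
    · left; ext; simp [h]
    · right; ext; simp [h]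

lemma discr_eq (e : QuadraticAlgebra ℤ (-m) 1 ≃ₐ[ℤ] 𝓞 K) : discr K = 1 - 4 * m := by
  let B := QuadraticAlgebra.basis (-m) (1 : ℤ)
  have h0 : B 0 = ⟨1, 0⟩ := by
    simp [B, QuadraticAlgebra.basis]
  have h1 : B 1 = ⟨0, 1⟩ := by
    simp [B, QuadraticAlgebra.basis]
  have htr : ∀ z, Algebra.trace ℤ (𝓞 K) (e z) = 2 * z.re + z.im := by
    intro z
    rw [Algebra.trace_eq_of_algEquiv e, Algebra.trace_eq_matrix_trace B, Matrix.trace_fin_two,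
      Algebra.leftMulMatrix_eq_repr_mul, Algebra.leftMulMatrix_eq_repr_mul, h0, h1]
    simp [B]; ring
  rw [← discr_eq_discr K (B.map e.toLinearEquiv), Algebra.discr_def, Matrix.det_fin_two]
  simp only [Algebra.traceMatrix_apply, Algebra.traceForm_apply, Module.Basis.map_apply, AlgEquiv.toLinearEquiv_apply,
    ← map_mul, htr, h0, h1]
  simp
  ring

lemma theta_rel (e : QuadraticAlgebra ℤ (-m) 1 ≃ₐ[ℤ] 𝓞 K) :
    ∃ t : K, (2 * t - 1) ^ 2 = 1 - 4 * (m : K) := by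
  refine ⟨((e ⟨0, 1⟩ : 𝓞 K) : K), ?_⟩
  have h : (2 * (⟨0, 1⟩ : QuadraticAlgebra ℤ (-m) 1) - 1) ^ 2 = 1 - 4 * (m : QuadraticAlgebra ℤ (-m) 1) := by
    rw [sq]
    ext <;> simp [QuadraticAlgebra.re_one, QuadraticAlgebra.im_one, QuadraticAlgebra.re_ofNat, QuadraticAlgebra.im_ofNat] <;> ring
  have := congrArg (fun z => ((e z : 𝓞 K) : K)) h
  simpa [map_ofNat] using this

lemma totallyComplex (e : QuadraticAlgebra ℤ (-m) 1 ≃ₐ[ℤ] 𝓞 K) (hm : 2 ≤ m) : IsTotallyComplex K := by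
  refine ⟨fun v => ?_⟩
  rw [← InfinitePlace.not_isReal_iff_isComplex]
  intro hv
  obtain ⟨t, ht⟩ := theta_rel e
  have h1 := congrArg (InfinitePlace.embedding_of_isReal hv) ht
  simp [map_ofNat] at h1
  have : (2 : ℝ) ≤ m := by exact_mod_cast hm
  nlinarith [sq_nonneg (2 * (InfinitePlace.embedding_of_isReal hv t) - 1)]

lemma residue_eq (e : QuadraticAlgebra ℤ (-m) 1 ≃ₐ[ℤ] 𝓞 K) (hm : 2 ≤ m) (p : ℕ) (hp : (p : ℤ) + 1 = 4 * m) :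
    dedekindZeta_residue K = Real.pi / Real.sqrt p * classNumber K := by
  have := totallyComplex e hm
  have h1 : InfinitePlace.nrRealPlaces K = 0 := IsTotallyComplex.nrRealPlaces_eq_zero K
  have h2 : InfinitePlace.nrComplexPlaces K = 1 := by
    have := InfinitePlace.card_add_two_mul_card_eq_rank K
    rw [h1, finrank_K e] at this
    omega
  have h3 : Units.rank K = 0 := by
    rw [Units.rank, InfinitePlace.card_eq_nrRealPlaces_add_nrComplexPlaces, h1, h2]
  have h4 : Units.regulator K = 1 := by
    obtain ⟨w⟩ : Nonempty (InfinitePlace K) := inferInstance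
    have hc : Fintype.card (InfinitePlace K) = 1 := by
      rw [InfinitePlace.card_eq_nrRealPlaces_add_nrComplexPlaces, h1, h2]
    have hs := Fintype.card_le_one_iff.mp hc.le
    have he : IsEmpty {w' // w' ≠ w} := ⟨fun x => x.2 (hs _ _)⟩
    have he2 : IsEmpty (Fin (Units.rank K)) := by rw [h3]; infer_instance
    rw [Units.regulator_eq_det K w (Equiv.equivOfIsEmpty _ _)]
    classical
    have hd : ∀ M : Matrix {w' // w' ≠ w} {w' // w' ≠ w} ℝ, |M.det| = 1 := fun M => by
      rw [Matrix.det_isEmpty, abs_one]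
    convert hd _
  rw [dedekindZeta_residue_def, h1, h2, h4, torsion_two e hm, discr_eq e]
  have h5 : |((1 - 4 * m : ℤ) : ℝ)| = p := by
    rw [← hp, show (1 : ℤ) - (p + 1) = - p by ring]; simp
  rw [h5]
  have : (0 : ℝ) < p := by
    have : 0 < p := by omega
    exact_mod_cast this
  have := Real.sqrt_pos.mpr this
  push_cast
  field_simp
end
end CNF

namespace CNF
open NumberField

lemma coprime_sup {K : Type*} [Field K] [NumberField K] {m n : ℕ} (hmn : m.Coprime n) {I J : Ideal (𝓞 K)}
    (hI : (m : 𝓞 K) ∈ I) (hJ : (n : 𝓞 K) ∈ J) : I ⊔ J = ⊤ := by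
  rw [Ideal.eq_top_iff_one]
  have h : IsCoprime (m : ℤ) (n : ℤ) := Nat.isCoprime_iff_coprime.mpr hmn
  obtain ⟨a, b, hab⟩ := h
  have h2 : (a : 𝓞 K) * m + b * n = 1 := by exact_mod_cast congrArg (Int.cast : ℤ → 𝓞 K) hab
  rw [← h2]
  exact Submodule.add_mem_sup (I.mul_mem_left _ hI) (J.mul_mem_left _ hJ)

lemma recover {K : Type*} [Field K] [NumberField K] {m n : ℕ} (hmn : m.Coprime n) {I J : Ideal (𝓞 K)}
    (hI : Ideal.absNorm I = m) (hJ : Ideal.absNorm J = n) : I * J ⊔ Ideal.span {(m : 𝓞 K)} = I := by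
  have hmI : (m : 𝓞 K) ∈ I := hI ▸ Ideal.absNorm_mem I
  have hnJ : (n : 𝓞 K) ∈ J := hJ ▸ Ideal.absNorm_mem J
  apply le_antisymm
  · apply sup_le Ideal.mul_le_left
    rwa [Ideal.span_singleton_le_iff_mem]
  · have h1 : J ⊔ Ideal.span {(m : 𝓞 K)} = ⊤ := by
      rw [sup_comm]
      exact coprime_sup hmn (Ideal.mem_span_singleton_self _) hnJ
    calc I = I * (J ⊔ Ideal.span {(m : 𝓞 K)}) := by rw [h1, Ideal.mul_top]
      _ = I * J ⊔ I * Ideal.span {(m : 𝓞 K)} := Ideal.mul_sup _ _ _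
      _ ≤ _ := sup_le_sup_left Ideal.mul_le_right _

lemma card_mul {K : Type*} [Field K] [NumberField K] (h2 : Module.finrank ℤ (𝓞 K) = 2) {m n : ℕ} (hmn : m.Coprime n)
    (hm : m ≠ 0) (hn : n ≠ 0) :
    Nat.card {I : Ideal (𝓞 K) // Ideal.absNorm I = m * n} =
     Nat.card {I : Ideal (𝓞 K) // Ideal.absNorm I = m} * Nat.card {I : Ideal (𝓞 K) // Ideal.absNorm I = n} := by
  rw [← Nat.card_prod]
  symm
  apply Nat.card_congr
  refine Equiv.ofBijective (fun x => ⟨x.1.1 * x.2.1, by rw [map_mul, x.1.2, x.2.2]⟩) ⟨?_, ?_⟩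
  · rintro ⟨⟨I, hI⟩, ⟨J, hJ⟩⟩ ⟨⟨I', hI'⟩, ⟨J', hJ'⟩⟩ h
    have h : I * J = I' * J' := congrArg Subtype.val h
    have e1 := recover hmn hI hJ
    have e2 := recover hmn hI' hJ'
    have e3 := recover hmn.symm hJ hI
    have e4 := recover hmn.symm hJ' hI'
    have hIe : I = I' := by rw [← e1, h, e2]
    have hJe : J = J' := by rw [← e3, mul_comm, h, mul_comm, e4]
    subst hIe hJe
    rfl
  · rintro ⟨L, hL⟩
    have hmnL : (m : 𝓞 K) * n ∈ L := by
      have := Ideal.absNorm_mem L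
      rw [hL] at this
      exact_mod_cast this
    set I := L ⊔ Ideal.span {(m : 𝓞 K)} with hI
    set J := L ⊔ Ideal.span {(n : 𝓞 K)} with hJ
    have hprod : I * J = L := by
      apply le_antisymm
      · rw [hI, hJ, Ideal.sup_mul, Ideal.mul_sup, Ideal.mul_sup]
        refine sup_le (sup_le Ideal.mul_le_left Ideal.mul_le_left) (sup_le Ideal.mul_le_right ?_)
        rw [Ideal.span_singleton_mul_span_singleton, Ideal.span_singleton_le_iff_mem]
        exact hmnL
      · have h1 : I ⊔ J = ⊤ := coprime_sup hmn (hI ▸ Ideal.mem_sup_right (Ideal.mem_span_singleton_self _))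
          (hJ ▸ Ideal.mem_sup_right (Ideal.mem_span_singleton_self _))
        calc L = L * (I ⊔ J) := by rw [h1, Ideal.mul_top]
          _ = L * I ⊔ L * J := Ideal.mul_sup _ _ _
          _ ≤ I * J := sup_le (by rw [mul_comm]; exact Ideal.mul_mono_right le_sup_left) (Ideal.mul_mono_left le_sup_left)
    have hN : Ideal.absNorm I * Ideal.absNorm J = m * n := by rw [← map_mul, hprod, hL]
    have hnorm : ∀ k : ℕ, Ideal.absNorm (Ideal.span {(k : 𝓞 K)}) = k ^ 2 := by
      intro k
      rw [Ideal.absNorm_span_natCast, h2]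
    have hI1 : Ideal.absNorm I ∣ m := by
      have h3 : Ideal.absNorm I ∣ m ^ 2 := hnorm m ▸ Ideal.absNorm_dvd_absNorm_of_le le_sup_right
      have h4 : (Ideal.absNorm I).Coprime n := Nat.Coprime.coprime_dvd_left h3 (hmn.pow_left 2)
      exact h4.dvd_of_dvd_mul_right (hN ▸ dvd_mul_right _ _)
    have hJ1 : Ideal.absNorm J ∣ n := by
      have h3 : Ideal.absNorm J ∣ n ^ 2 := hnorm n ▸ Ideal.absNorm_dvd_absNorm_of_le le_sup_right
      have h4 : (Ideal.absNorm J).Coprime m := Nat.Coprime.coprime_dvd_left h3 (hmn.symm.pow_left 2)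
      exact h4.dvd_of_dvd_mul_left (hN ▸ dvd_mul_left _ _)
    have hI2 := Nat.le_of_dvd (Nat.pos_of_ne_zero hm) hI1
    have hJ2 := Nat.le_of_dvd (Nat.pos_of_ne_zero hn) hJ1
    have hI3 : Ideal.absNorm I = m := by
      apply le_antisymm hI2
      apply Nat.le_of_mul_le_mul_right _ (Nat.pos_of_ne_zero hn)
      rw [← hN]
      exact Nat.mul_le_mul_left _ hJ2
    have hJ3 : Ideal.absNorm J = n := by
      rw [hI3] at hN
      exact Nat.eq_of_mul_eq_mul_left (Nat.pos_of_ne_zero hm) hN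
    exact ⟨⟨⟨I, hI3⟩, ⟨J, hJ3⟩⟩, Subtype.ext hprod⟩
end CNF

namespace CNF
open NumberField

lemma peel {K : Type*} [Field K] [NumberField K] {q : ℕ} (k : ℕ) (hq : q.Prime) {I : Ideal (𝓞 K)}
    (hI : Ideal.absNorm I = q ^ (k + 1)) :
    ∃ Q : Ideal (𝓞 K), Q.IsMaximal ∧ (q : 𝓞 K) ∈ Q ∧ ∃ J, I = Q * J := by
  have hne : I ≠ ⊤ := by
    intro h
    rw [h, Ideal.absNorm_top] at hI
    exact (Nat.one_lt_pow (by omega) hq.one_lt).ne hI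
  obtain ⟨Q, hQ, hle⟩ := Ideal.exists_le_maximal I hne
  refine ⟨Q, hQ, ?_, ?_⟩
  · have h := hle (Ideal.absNorm_mem I)
    rw [hI] at h
    push_cast at h
    exact hQ.isPrime.mem_of_pow_mem _ h
  · exact Ideal.dvd_iff_le.mpr hle

lemma dec {K : Type*} [Field K] [NumberField K] {q : ℕ} (hq : q.Prime) (P P' : Ideal (𝓞 K))
    (hall : ∀ Q : Ideal (𝓞 K), Q.IsMaximal → (q : 𝓞 K) ∈ Q → Q = P ∨ Q = P') :
    ∀ (k : ℕ) (I : Ideal (𝓞 K)), Ideal.absNorm I = q ^ k → ∃ i j : ℕ, I = P ^ i * P' ^ j := by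
  intro k
  induction k using Nat.strong_induction_on with
  | _ k ih =>
    intro I hI
    rcases k with _ | k
    · refine ⟨0, 0, ?_⟩
      rw [pow_zero, Ideal.absNorm_eq_one_iff] at hI
      simp [hI]
    · obtain ⟨Q, hQ, hqQ, J, rfl⟩ := peel k hq hI
      rw [map_mul] at hI
      have hJd : Ideal.absNorm J ∣ q ^ (k + 1) := hI ▸ dvd_mul_left _ _
      obtain ⟨l, hl, hJ⟩ := (Nat.dvd_prime_pow hq).mp hJd
      have hlt : l < k + 1 := by
        refine lt_of_le_of_ne hl ?_
        rintro rfl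
        rw [hJ] at hI
        have h1 : Ideal.absNorm Q = 1 := Nat.eq_of_mul_eq_mul_right (pow_pos hq.pos _) (by rw [hI, one_mul])
        rw [Ideal.absNorm_eq_one_iff] at h1
        exact hQ.ne_top h1
      obtain ⟨i, j, hij⟩ := ih l hlt J hJ
      rcases hall Q hQ hqQ with h | h
      · exact ⟨i + 1, j, by rw [hij, h]; ring⟩
      · exact ⟨i, j + 1, by rw [hij, h]; ring⟩

lemma count_split {K : Type*} [Field K] [NumberField K] {q : ℕ} (hq : q.Prime) (P P' : Ideal (𝓞 K))
    (hP : Ideal.absNorm P = q) (hP' : Ideal.absNorm P' = q) (hne : P ≠ P')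
    (hall : ∀ Q : Ideal (𝓞 K), Q.IsMaximal → (q : 𝓞 K) ∈ Q → Q = P ∨ Q = P') (k : ℕ) :
    Nat.card {I : Ideal (𝓞 K) // Ideal.absNorm I = q ^ k} = k + 1 := by
  rw [← Nat.card_fin (k + 1)]
  symm
  apply Nat.card_congr
  have hPp : P.IsPrime := Ideal.isPrime_of_irreducible_absNorm (by rw [hP]; exact hq)
  have hPp' : P'.IsPrime := Ideal.isPrime_of_irreducible_absNorm (by rw [hP']; exact hq)
  have hP0 : P ≠ ⊥ := by intro h; rw [h, Ideal.absNorm_bot] at hP; exact hq.ne_zero hP.symm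
  have hP0' : P' ≠ ⊥ := by intro h; rw [h, Ideal.absNorm_bot] at hP'; exact hq.ne_zero hP'.symm
  have hPm : P.IsMaximal := hPp.isMaximal hP0
  have hPm' : P'.IsMaximal := hPp'.isMaximal hP0'
  have key : ∀ i i' : ℕ, i < i' → i' ≤ k → P ^ i * P' ^ (k - i) ≠ P ^ i' * P' ^ (k - i') := by
    intro i i' h1 h2 h
    obtain ⟨d, rfl⟩ : ∃ d, i' = i + (d + 1) := ⟨i' - i - 1, by omega⟩
    have h3 : k - i = (k - (i + (d + 1))) + (d + 1) := by omega
    rw [h3, pow_add, pow_add P, mul_assoc] at h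
    have h4 := mul_left_cancel₀ (pow_ne_zero i (by simpa using hP0)) h
    rw [mul_comm] at h4
    have h5 := mul_right_cancel₀ (pow_ne_zero _ (by simpa using hP0')) h4
    have h6 : P ^ (d + 1) ≤ P' := by rw [← h5]; exact Ideal.pow_le_self (by omega)
    have h7 : P ≤ P' := hPp'.le_of_pow_le h6
    exact hne (hPm.eq_of_le hPm'.ne_top h7)
  refine Equiv.ofBijective (fun i : Fin (k + 1) => ⟨P ^ (i : ℕ) * P' ^ (k - i), ?_⟩) ⟨?_, ?_⟩
  · rw [map_mul, map_pow, map_pow, hP, hP', ← pow_add]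
    congr 1
    omega
  · intro i j h
    have h : P ^ (i : ℕ) * P' ^ (k - i) = P ^ (j : ℕ) * P' ^ (k - j) := congrArg Subtype.val h
    rcases lt_trichotomy (i : ℕ) j with h1 | h1 | h1
    · exact absurd h (key _ _ h1 (by omega))
    · exact Fin.ext h1
    · exact absurd h.symm (key _ _ h1 (by omega))
  · rintro ⟨I, hI⟩
    obtain ⟨i, j, rfl⟩ := dec hq P P' hall k I hI
    rw [map_mul, map_pow, map_pow, hP, hP', ← pow_add] at hI
    have := Nat.pow_right_injective hq.two_le hI
    refine ⟨⟨i, by omega⟩, Subtype.ext ?_⟩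
    change P ^ i * P' ^ (k - i) = _
    congr 2
    omega

lemma count_ram {K : Type*} [Field K] [NumberField K] {q : ℕ} (hq : q.Prime) (P : Ideal (𝓞 K))
    (hP : Ideal.absNorm P = q)
    (hall : ∀ Q : Ideal (𝓞 K), Q.IsMaximal → (q : 𝓞 K) ∈ Q → Q = P) (k : ℕ) :
    Nat.card {I : Ideal (𝓞 K) // Ideal.absNorm I = q ^ k} = 1 := by
  rw [Nat.card_eq_one_iff_unique]
  have h1 : ∀ I : Ideal (𝓞 K), Ideal.absNorm I = q ^ k → I = P ^ k := by
    intro I hI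
    obtain ⟨i, j, rfl⟩ := dec hq P P (fun Q h1 h2 => Or.inl (hall Q h1 h2)) k I hI
    rw [map_mul, map_pow, map_pow, hP, ← pow_add] at hI
    have := Nat.pow_right_injective hq.two_le hI
    rw [← pow_add, this]
  exact ⟨⟨fun a b => Subtype.ext (by rw [h1 a.1 a.2, h1 b.1 b.2])⟩, ⟨⟨P ^ k, by rw [map_pow, hP]⟩⟩⟩

lemma count_inert {K : Type*} [Field K] [NumberField K] {q : ℕ} (hq : q.Prime) (P : Ideal (𝓞 K))
    (hP : Ideal.absNorm P = q ^ 2)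
    (hall : ∀ Q : Ideal (𝓞 K), Q.IsMaximal → (q : 𝓞 K) ∈ Q → Q = P) (k : ℕ) :
    Nat.card {I : Ideal (𝓞 K) // Ideal.absNorm I = q ^ k} = if Even k then 1 else 0 := by
  have h1 : ∀ I : Ideal (𝓞 K), Ideal.absNorm I = q ^ k → ∃ i, I = P ^ i ∧ k = 2 * i := by
    intro I hI
    obtain ⟨i, j, rfl⟩ := dec hq P P (fun Q h1 h2 => Or.inl (hall Q h1 h2)) k I hI
    rw [map_mul, map_pow, map_pow, hP, ← pow_add, ← pow_mul] at hI
    have := Nat.pow_right_injective hq.two_le hI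
    exact ⟨i + j, by rw [pow_add], this.symm⟩
  split_ifs with hk
  · rw [Nat.card_eq_one_iff_unique]
    refine ⟨⟨fun a b => Subtype.ext ?_⟩, ?_⟩
    · obtain ⟨i, hi, hi'⟩ := h1 a.1 a.2
      obtain ⟨j, hj, hj'⟩ := h1 b.1 b.2
      rw [hi, hj]; congr 1; omega
    · obtain ⟨r, rfl⟩ := hk
      exact ⟨⟨P ^ r, by rw [map_pow, hP, ← pow_mul]; congr 1; ring⟩⟩
  · rw [Nat.card_eq_zero]
    left
    constructor
    rintro ⟨I, hI⟩
    obtain ⟨i, _, hi⟩ := h1 I hI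
    exact hk ⟨i, by omega⟩
end CNF

namespace CNF
open NumberField

lemma exists_P {K : Type*} [Field K] [NumberField K] {m : ℤ} (e : QuadraticAlgebra ℤ (-m) 1 ≃ₐ[ℤ] 𝓞 K)
    {q : ℕ} (hq : q.Prime) (r : ℤ) (hr : (q : ℤ) ∣ r ^ 2 - r + m) :
    ∃ P : Ideal (𝓞 K), Ideal.absNorm P = q ∧ e ⟨0, 1⟩ - (r : 𝓞 K) ∈ P ∧
      ∀ Q : Ideal (𝓞 K), (q : 𝓞 K) ∈ Q → e ⟨0, 1⟩ - (r : 𝓞 K) ∈ Q → P ≤ Q := by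
  have : Fact q.Prime := ⟨hq⟩
  have hr0 : (r : ZMod q) ^ 2 - r + m = 0 := by
    have := (ZMod.intCast_zmod_eq_zero_iff_dvd _ q).mpr hr
    exact_mod_cast this
  let φ : QuadraticAlgebra ℤ (-m) 1 →ₐ[ℤ] ZMod q := QuadraticAlgebra.lift ⟨(r : ZMod q), by
    simp; linear_combination hr0⟩
  have hφ : ∀ z, φ z = (z.re : ZMod q) + z.im * r := by
    intro z; simp [φ, QuadraticAlgebra.lift]
  let ψ : 𝓞 K →+* ZMod q := (φ.comp e.symm.toAlgHom).toRingHom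
  have hψ : ∀ z, ψ (e z) = (z.re : ZMod q) + z.im * r := by
    intro z
    rw [← hφ]
    change φ (e.symm (e z)) = _
    simp
  have hsurj : Function.Surjective ψ := ZMod.ringHom_surjective ψ
  refine ⟨RingHom.ker ψ, ?_, ?_, ?_⟩
  · rw [Ideal.absNorm_apply, Submodule.cardQuot_apply,
      Nat.card_congr (RingHom.quotientKerEquivOfSurjective hsurj).toEquiv, Nat.card_zmod]
  · rw [RingHom.mem_ker, map_sub, hψ]
    simp
  · intro Q hqQ hθQ x hx
    obtain ⟨z, rfl⟩ := e.surjective x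
    rw [RingHom.mem_ker, hψ] at hx
    have h1 : (q : ℤ) ∣ z.re + z.im * r := by
      rw [← ZMod.intCast_zmod_eq_zero_iff_dvd]
      push_cast
      exact hx
    obtain ⟨c, hc⟩ := h1
    have h2 : e z = (z.re : 𝓞 K) + z.im * e ⟨0, 1⟩ := by
      have : z = (z.re : QuadraticAlgebra ℤ (-m) 1) + z.im * ⟨0, 1⟩ := by
        ext <;> simp
      conv_lhs => rw [this]
      simp only [map_add, map_mul, map_intCast]
    have h3 : (z.re : 𝓞 K) + z.im * r = q * c := by exact_mod_cast congrArg (Int.cast : ℤ → 𝓞 K) hc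
    have h4 : e z = c * q + z.im * (e ⟨0, 1⟩ - r) := by
      rw [h2]; linear_combination h3
    rw [h4]
    exact Q.add_mem (Q.mul_mem_left _ hqQ) (Q.mul_mem_left _ hθQ)

lemma theta_eq {K : Type*} [Field K] [NumberField K] {m : ℤ} (e : QuadraticAlgebra ℤ (-m) 1 ≃ₐ[ℤ] 𝓞 K) :
    (e ⟨0, 1⟩) ^ 2 = e ⟨0, 1⟩ - (m : 𝓞 K) := by
  have h : (⟨0, 1⟩ : QuadraticAlgebra ℤ (-m) 1) ^ 2 = ⟨0, 1⟩ - (m : QuadraticAlgebra ℤ (-m) 1) := by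
    rw [sq]; ext <;> simp
  have := congrArg e h
  simpa using this

lemma root_of_norm {K : Type*} [Field K] [NumberField K] {m : ℤ} (e : QuadraticAlgebra ℤ (-m) 1 ≃ₐ[ℤ] 𝓞 K)
    {q : ℕ} (hq : q.Prime) (Q : Ideal (𝓞 K)) (hQ : Ideal.absNorm Q = q) :
    ∃ r : ℤ, (q : ℤ) ∣ r ^ 2 - r + m := by
  have : Fact q.Prime := ⟨hq⟩
  have hcard : Nat.card (𝓞 K ⧸ Q) = q := by
    rw [← Submodule.cardQuot_apply, ← Ideal.absNorm_apply, hQ]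
  have hfin : Finite (𝓞 K ⧸ Q) := Nat.finite_of_card_ne_zero (by rw [hcard]; exact hq.ne_zero)
  have hQp : Q.IsPrime := Ideal.isPrime_of_irreducible_absNorm (by rw [hQ]; exact hq)
  have hqQ : (q : 𝓞 K) ∈ Q := by
    have := Ideal.absNorm_mem Q
    rwa [hQ] at this
  have hmem : ∀ a : ℤ, (a : 𝓞 K) ∈ Q → (q : ℤ) ∣ a := by
    intro a ha
    by_contra hnd
    have h1 : IsCoprime (q : ℤ) a := (Nat.prime_iff_prime_int.mp hq).coprime_iff_not_dvd.mpr hnd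
    obtain ⟨u, v, huv⟩ := h1
    have h2 : (u : 𝓞 K) * q + v * a = 1 := by exact_mod_cast congrArg (Int.cast : ℤ → 𝓞 K) huv
    apply hQp.ne_top
    rw [Ideal.eq_top_iff_one, ← h2]
    exact Q.add_mem (Q.mul_mem_left _ hqQ) (Q.mul_mem_left _ ha)
  let g : Fin q → 𝓞 K ⧸ Q := fun i => Ideal.Quotient.mk Q ((i : ℕ) : 𝓞 K)
  have hinj : Function.Injective g := by
    intro i j h
    have h1 : (((i : ℕ) : 𝓞 K) - ((j : ℕ) : 𝓞 K)) ∈ Q := Ideal.Quotient.eq.mp h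
    have h2 := hmem ((i : ℕ) - (j : ℕ) : ℤ) (by exact_mod_cast h1)
    have hi := i.2
    have hj := j.2
    obtain ⟨c, hc⟩ := h2
    have h3 : c = 0 := by
      by_contra h0
      rcases lt_or_gt_of_ne h0 with h | h
      · nlinarith
      · nlinarith
    rw [h3] at hc
    ext
    omega
  have hbij : Function.Bijective g := hinj.bijective_of_nat_card_le (by rw [hcard, Nat.card_fin])
  obtain ⟨i, hi⟩ := hbij.2 (Ideal.Quotient.mk Q (e ⟨0, 1⟩))
  refine ⟨(i : ℕ), hmem _ ?_⟩
  have h1 : ((i : ℕ) : 𝓞 K) - e ⟨0, 1⟩ ∈ Q := Ideal.Quotient.eq.mp hi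
  have h2 := Q.mul_mem_left (((i : ℕ) : 𝓞 K) + e ⟨0, 1⟩ - 1) h1
  convert h2 using 1
  push_cast
  linear_combination theta_eq e

lemma count_case_inert {K : Type*} [Field K] [NumberField K] {m : ℤ} (e : QuadraticAlgebra ℤ (-m) 1 ≃ₐ[ℤ] 𝓞 K)
    {q : ℕ} (hq : q.Prime) (hno : ∀ r : ℤ, ¬ (q : ℤ) ∣ r ^ 2 - r + m) (k : ℕ) :
    Nat.card {I : Ideal (𝓞 K) // Ideal.absNorm I = q ^ k} = if Even k then 1 else 0 := by
  have hN : Ideal.absNorm (Ideal.span {(q : 𝓞 K)}) = q ^ 2 := by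
    rw [Ideal.absNorm_span_natCast, finrank_int e]
  refine count_inert hq (Ideal.span {(q : 𝓞 K)}) hN ?_ k
  intro Q hQ hqQ
  have hle : Ideal.span {(q : 𝓞 K)} ≤ Q := by rwa [Ideal.span_singleton_le_iff_mem]
  have hd := Ideal.absNorm_dvd_absNorm_of_le hle
  rw [hN] at hd
  obtain ⟨l, hl, hQl⟩ := (Nat.dvd_prime_pow hq).mp hd
  interval_cases l
  · rw [pow_zero, Ideal.absNorm_eq_one_iff] at hQl
    exact absurd hQl hQ.ne_top
  · rw [pow_one] at hQl
    obtain ⟨r, hr⟩ := root_of_norm e hq Q hQl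
    exact absurd hr (hno r)
  · obtain ⟨J, hJ⟩ := Ideal.dvd_iff_le.mpr hle
    have h1 : Ideal.absNorm J = 1 := by
      have := congrArg Ideal.absNorm hJ
      rw [map_mul, hN, hQl] at this
      exact (Nat.eq_of_mul_eq_mul_left (pow_pos hq.pos 2) (by rw [← this, mul_one])).symm
    rw [Ideal.absNorm_eq_one_iff] at h1
    rw [hJ, h1, Ideal.mul_top]

lemma primes_root {K : Type*} [Field K] [NumberField K] {m : ℤ} (e : QuadraticAlgebra ℤ (-m) 1 ≃ₐ[ℤ] 𝓞 K)
    {q : ℕ} (r : ℤ) (hr : (q : ℤ) ∣ r ^ 2 - r + m) (Q : Ideal (𝓞 K)) (hQ : Q.IsPrime)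
    (hqQ : (q : 𝓞 K) ∈ Q) : e ⟨0, 1⟩ - (r : 𝓞 K) ∈ Q ∨ e ⟨0, 1⟩ - ((1 - r : ℤ) : 𝓞 K) ∈ Q := by
  apply hQ.mem_or_mem
  obtain ⟨c, hc⟩ := hr
  have h3 : (r : 𝓞 K) ^ 2 - r + m = q * c := by exact_mod_cast congrArg (Int.cast : ℤ → 𝓞 K) hc
  have : (e ⟨0, 1⟩ - (r : 𝓞 K)) * (e ⟨0, 1⟩ - ((1 - r : ℤ) : 𝓞 K)) = -c * q := by
    push_cast
    linear_combination theta_eq e - h3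
  rw [this]
  exact Q.mul_mem_left _ hqQ

lemma norm_prime_max {K : Type*} [Field K] [NumberField K] {q : ℕ} (hq : q.Prime) (P : Ideal (𝓞 K))
    (hP : Ideal.absNorm P = q) : P.IsMaximal := by
  have hPp : P.IsPrime := Ideal.isPrime_of_irreducible_absNorm (by rw [hP]; exact hq)
  have hP0 : P ≠ ⊥ := by intro h; rw [h, Ideal.absNorm_bot] at hP; exact hq.ne_zero hP.symm
  exact hPp.isMaximal hP0

lemma count_case_split {K : Type*} [Field K] [NumberField K] {m : ℤ} (e : QuadraticAlgebra ℤ (-m) 1 ≃ₐ[ℤ] 𝓞 K)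
    {q : ℕ} (hq : q.Prime) (r : ℤ) (hr : (q : ℤ) ∣ r ^ 2 - r + m) (hr2 : ¬ (q : ℤ) ∣ 2 * r - 1) (k : ℕ) :
    Nat.card {I : Ideal (𝓞 K) // Ideal.absNorm I = q ^ k} = k + 1 := by
  obtain ⟨P, hP, hθP, hPmin⟩ := exists_P e hq r hr
  obtain ⟨P', hP', hθP', hPmin'⟩ := exists_P e hq (1 - r) (by convert hr using 1; ring)
  have hPm := norm_prime_max hq P hP
  have hPm' := norm_prime_max hq P' hP'
  refine count_split hq P P' hP hP' ?_ ?_ k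
  · rintro rfl
    have h1 := P.sub_mem hθP hθP'
    have h2 : ((1 - 2 * r : ℤ) : 𝓞 K) ∈ P := by
      convert h1 using 1; push_cast; ring
    have hqP : (q : 𝓞 K) ∈ P := by
      have := Ideal.absNorm_mem P
      rwa [hP] at this
    have h1 : IsCoprime (q : ℤ) (1 - 2 * r) := (Nat.prime_iff_prime_int.mp hq).coprime_iff_not_dvd.mpr (by
      intro h
      exact hr2 (by rw [← dvd_neg]; convert h using 1; ring))
    obtain ⟨u, v, huv⟩ := h1
    have h3 : (u : 𝓞 K) * q + v * ((1 - 2 * r : ℤ) : 𝓞 K) = 1 := by exact_mod_cast congrArg (Int.cast : ℤ → 𝓞 K) huv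
    apply hPm.ne_top
    rw [Ideal.eq_top_iff_one, ← h3]
    exact P.add_mem (P.mul_mem_left _ hqP) (P.mul_mem_left _ h2)
  · intro Q hQ hqQ
    rcases primes_root e r hr Q hQ.isPrime hqQ with h | h
    · left; exact (hPm.eq_of_le hQ.ne_top (hPmin Q hqQ h)).symm
    · right; exact (hPm'.eq_of_le hQ.ne_top (hPmin' Q hqQ h)).symm

lemma count_case_ram {K : Type*} [Field K] [NumberField K] {m : ℤ} (e : QuadraticAlgebra ℤ (-m) 1 ≃ₐ[ℤ] 𝓞 K)
    {q : ℕ} (hq : q.Prime) (r : ℤ) (hr : (q : ℤ) ∣ r ^ 2 - r + m) (hr2 : (q : ℤ) ∣ 2 * r - 1) (k : ℕ) :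
    Nat.card {I : Ideal (𝓞 K) // Ideal.absNorm I = q ^ k} = 1 := by
  obtain ⟨P, hP, hθP, hPmin⟩ := exists_P e hq r hr
  have hPm := norm_prime_max hq P hP
  refine count_ram hq P hP ?_ k
  intro Q hQ hqQ
  have h0 : e ⟨0, 1⟩ - (r : 𝓞 K) ∈ Q := by
    rcases primes_root e r hr Q hQ.isPrime hqQ with h | h
    · exact h
    · obtain ⟨c, hc⟩ := hr2
      have h3 : 2 * (r : 𝓞 K) - 1 = q * c := by exact_mod_cast congrArg (Int.cast : ℤ → 𝓞 K) hc
      have h4 : e ⟨0, 1⟩ - (r : 𝓞 K) = (e ⟨0, 1⟩ - ((1 - r : ℤ) : 𝓞 K)) - c * q := by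
        push_cast; linear_combination -h3
      rw [h4]
      exact Q.sub_mem h (Q.mul_mem_left _ hqQ)
  exact (hPm.eq_of_le hQ.ne_top (hPmin Q hqQ h0)).symm
end CNF

namespace CNF
open NumberField

lemma leg_flip (p q : ℕ) [Fact p.Prime] [Fact q.Prime] (hp3 : p % 4 = 3) (hq2 : q ≠ 2) :
    legendreSym q (-(p : ℤ)) = legendreSym p q := by
  have hqodd := (Fact.out : q.Prime).eq_two_or_odd.resolve_left hq2
  rw [show (-(p : ℤ)) = (-1) * p by ring, legendreSym.mul, legendreSym.at_neg_one hq2]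
  have : q % 4 = 1 ∨ q % 4 = 3 := by omega
  rcases this with h | h
  · rw [ZMod.χ₄_nat_one_mod_four h, one_mul, legendreSym.quadratic_reciprocity_one_mod_four h (by omega)]
  · rw [ZMod.χ₄_nat_three_mod_four h, legendreSym.quadratic_reciprocity_three_mod_four hp3 h]
    ring

lemma root_iff (p q : ℕ) [Fact p.Prime] (hq : q.Prime) (hqp : q ≠ p) (hp3 : p % 4 = 3) (m : ℤ)
    (hm : (p : ℤ) + 1 = 4 * m) : (∃ r : ℤ, (q : ℤ) ∣ r ^ 2 - r + m) ↔ legendreSym p q = 1 := by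
  have : Fact q.Prime := ⟨hq⟩
  have hpp : p.Prime := Fact.out
  have hpm : (p : ℤ) = 4 * m - 1 := by omega
  have hqz : ((q : ℕ) : ZMod p) ≠ 0 := by
    rw [Ne, ZMod.natCast_eq_zero_iff, Nat.prime_dvd_prime_iff_eq hpp hq]
    exact fun h => hqp h.symm
  by_cases hq2 : q = 2
  · subst hq2
    rw [legendreSym.eq_one_iff' p hqz]
    push_cast
    rw [ZMod.exists_sq_eq_two_iff (by omega)]
    constructor
    · rintro ⟨r, hr⟩
      have : (2 : ℤ) ∣ r ^ 2 - r := by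
        have := (Int.even_mul_pred_self r).two_dvd
        have h0 : r ^ 2 - r = r * (r - 1) := by ring
        rw [h0]; exact this
      omega
    · intro h
      exact ⟨0, by push_cast; omega⟩
  · rw [← leg_flip p q hp3 hq2, legendreSym.eq_one_iff]
    · constructor
      · rintro ⟨r, hr⟩
        have hr0 : (r : ZMod q) ^ 2 - r + m = 0 := by
          have := (ZMod.intCast_zmod_eq_zero_iff_dvd _ q).mpr hr
          exact_mod_cast this
        refine ⟨2 * r - 1, ?_⟩
        rw [hpm]; push_cast
        linear_combination -4 * hr0
      · rintro ⟨s, hs⟩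
        have h2 : (2 : ZMod q) ≠ 0 := by
          have : ((2 : ℕ) : ZMod q) ≠ 0 := by
            rw [Ne, ZMod.natCast_eq_zero_iff, Nat.prime_dvd_prime_iff_eq hq Nat.prime_two]
            exact hq2
          simpa using this
        obtain ⟨r, hr⟩ := ZMod.intCast_surjective ((s + 1) / 2)
        refine ⟨r, ?_⟩
        rw [← ZMod.intCast_zmod_eq_zero_iff_dvd]
        push_cast
        rw [hr]
        rw [hpm] at hs; push_cast at hs
        field_simp
        linear_combination -hs
    · push_cast
      rw [Ne, neg_eq_zero, ZMod.natCast_eq_zero_iff, Nat.prime_dvd_prime_iff_eq hq hpp]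
      exact hqp

/-- number of ideals of given norm, as an arithmetic function -/
noncomputable def idealCount (K : Type*) [Field K] [NumberField K] : ArithmeticFunction ℂ :=
  ⟨fun n => if n = 0 then 0 else (Nat.card {I : Ideal (𝓞 K) // Ideal.absNorm I = n} : ℂ), by simp⟩

lemma idealCount_apply (K : Type*) [Field K] [NumberField K] {n : ℕ} (hn : n ≠ 0) :
    idealCount K n = (Nat.card {I : Ideal (𝓞 K) // Ideal.absNorm I = n} : ℂ) := by
  simp [idealCount, hn]

lemma idealCount_mult (K : Type*) [Field K] [NumberField K] (h2 : Module.finrank ℤ (𝓞 K) = 2) :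
    (idealCount K).IsMultiplicative := by
  rw [ArithmeticFunction.IsMultiplicative.iff_ne_zero]
  constructor
  · rw [idealCount_apply K one_ne_zero]
    simp [Ideal.absNorm_eq_one_iff]
  · intro m n hm hn hmn
    rw [idealCount_apply K hm, idealCount_apply K hn, idealCount_apply K (mul_ne_zero hm hn), card_mul h2 hmn hm hn]
    push_cast
    rfl

lemma zetaMul_pow (p : ℕ) [Fact p.Prime] {q : ℕ} (hq : q.Prime) (k : ℕ) :
    (chi p).zetaMul (q ^ k) = ∑ i ∈ range (k + 1), (chi p q) ^ i := by
  have h1 := ArithmeticFunction.coe_zeta_mul_apply (f := toArithmeticFunction (chi p ·)) (x := q ^ k)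
  refine h1.trans ?_
  rw [Nat.sum_divisors_prime_pow hq]
  refine sum_congr rfl fun i _ => ?_
  refine (DirichletCharacter.apply_eq_toArithmeticFunction_apply (chi p) (pow_ne_zero i hq.ne_zero)).symm.trans ?_
  rw [Nat.cast_pow, map_pow]

lemma count_eq_zetaMul {K : Type*} [Field K] [NumberField K] {m : ℤ} (e : QuadraticAlgebra ℤ (-m) 1 ≃ₐ[ℤ] 𝓞 K)
    (p : ℕ) [Fact p.Prime] (hp3 : p % 4 = 3) (hm : (p : ℤ) + 1 = 4 * m) :
    idealCount K = (chi p).zetaMul := by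
  rw [ArithmeticFunction.IsMultiplicative.eq_iff_eq_on_prime_powers _ (idealCount_mult K (finrank_int e)) _
    (DirichletCharacter.isMultiplicative_zetaMul _)]
  intro q k hq
  rw [zetaMul_pow p hq, idealCount_apply K (pow_ne_zero _ hq.ne_zero), chi_nat]
  have hpp : p.Prime := Fact.out
  by_cases hqp : q = p
  · subst hqp
    have hr2 : (q : ℤ) ∣ 2 * (2 * m) - 1 := ⟨1, by omega⟩
    have hr : (q : ℤ) ∣ (2 * m) ^ 2 - (2 * m) + m := ⟨m, by
      have : (q : ℤ) = 4 * m - 1 := by omega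
      rw [this]; ring⟩
    rw [count_case_ram e hq (2 * m) hr hr2]
    have : legendreSym q q = 0 := by
      rw [legendreSym.eq_zero_iff]; simp
    rw [this, sum_range_succ']
    simp
  · have hroot := root_iff p q hq hqp hp3 m hm
    have hqz : (((q : ℕ) : ℤ) : ZMod p) ≠ 0 := by
      push_cast
      rw [Ne, ZMod.natCast_eq_zero_iff, Nat.prime_dvd_prime_iff_eq hpp hq]
      exact fun h => hqp h.symm
    rcases legendreSym.eq_one_or_neg_one p hqz with h | h
    · obtain ⟨r, hr⟩ := hroot.mpr h
      rw [count_case_split e hq r hr ?_, h]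
      · simp
      · rintro ⟨c, hc⟩
        obtain ⟨d, hd⟩ := hr
        have h1 : (q : ℤ) ∣ (p : ℤ) := ⟨4 * d - q * c ^ 2, by
          have : (p : ℤ) = 4 * (r ^ 2 - r + m) - (2 * r - 1) ^ 2 := by linear_combination hm
          rw [this, hd, hc]; ring⟩
        exact hqp ((Nat.prime_dvd_prime_iff_eq hq hpp).mp (by exact_mod_cast h1))
    · rw [count_case_inert e hq ?_, h]
      · push_cast
        rw [neg_one_geom_sum]
        by_cases hk : Even k
        · have : ¬ Even (k + 1) := by rw [Nat.even_add_one]; simpa using hk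
          simp [hk]
        · have : Even (k + 1) := by rw [Nat.even_add_one]; exact hk
          simp [hk, this]
      · intro r hr
        have := hroot.mp ⟨r, hr⟩
        rw [h] at this
        norm_num at this
end CNF

namespace CNF
open NumberField Filter Topology

lemma LSeries_zetaMul (p : ℕ) [Fact p.Prime] {s : ℂ} (hs : 1 < s.re) :
    LSeries (chi p).zetaMul s = riemannZeta s * DirichletCharacter.LFunction (chi p) s := by
  have h1 : LSeriesSummable (fun n => ((ArithmeticFunction.zeta : ArithmeticFunction ℂ) n)) s :=
    ArithmeticFunction.LSeriesSummable_zeta_iff.mpr hs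
  have h2 : LSeriesSummable (fun n => (toArithmeticFunction (chi p ·)) n) s :=
    (LSeriesSummable_congr _ fun h ↦ ((chi p).apply_eq_toArithmeticFunction_apply h).symm).mpr <|
      ZMod.LSeriesSummable_of_one_lt_re (chi p) hs
  refine (ArithmeticFunction.LSeries_mul' h1 h2).trans ?_
  congr 1
  · rw [← ArithmeticFunction.LSeries_zeta_eq_riemannZeta hs]
    rfl
  · rw [(chi p).LFunction_eq_LSeries hs]
    exact LSeries_congr (fun {n} hn => ((chi p).apply_eq_toArithmeticFunction_apply hn).symm) s

lemma residue_L {K : Type*} [Field K] [NumberField K] {m : ℤ} (e : QuadraticAlgebra ℤ (-m) 1 ≃ₐ[ℤ] 𝓞 K)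
    (p : ℕ) [Fact p.Prime] (hp3 : p % 4 = 3) (hm : (p : ℤ) + 1 = 4 * m) :
    ((dedekindZeta_residue K : ℝ) : ℂ) = DirichletCharacter.LFunction (chi p) 1 := by
  have t1 := NumberField.tendsto_sub_one_mul_dedekindZeta_nhdsGT K
  have tr : Tendsto (fun s : ℝ => (s : ℂ)) (𝓝[>] 1) (𝓝[≠] 1) := by
    rw [tendsto_nhdsWithin_iff]
    constructor
    · have : Tendsto (fun s : ℝ => (s : ℂ)) (𝓝 1) (𝓝 ((1 : ℝ) : ℂ)) := Complex.continuous_ofReal.tendsto 1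
      rw [Complex.ofReal_one] at this
      exact this.mono_left nhdsWithin_le_nhds
    · filter_upwards [self_mem_nhdsWithin] with s hs
      have : (1 : ℝ) < s := hs
      simp only [Set.mem_compl_iff, Set.mem_singleton_iff]
      exact_mod_cast this.ne'
  have t2 := riemannZeta_residue_one.comp tr
  have hd : Differentiable ℂ (DirichletCharacter.LFunction (chi p)) :=
    DirichletCharacter.differentiable_LFunction (chi_ne_one p (by omega))
  have t3 : Tendsto (fun s : ℝ => DirichletCharacter.LFunction (chi p) s) (𝓝[>] 1)
      (𝓝 (DirichletCharacter.LFunction (chi p) 1)) :=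
    (hd.continuous.tendsto 1).comp (tr.mono_right nhdsWithin_le_nhds)
  have t4 := t2.mul t3
  rw [one_mul] at t4
  refine tendsto_nhds_unique (t1.congr' ?_) t4
  filter_upwards [self_mem_nhdsWithin] with s hs
  have hs1 : 1 < (s : ℂ).re := by simpa using hs
  simp only [Function.comp]
  rw [mul_assoc, ← LSeries_zetaMul p hs1, ← count_eq_zetaMul e p hp3 hm]
  congr 1
  exact LSeries_congr (fun {n} hn => (idealCount_apply K hn).symm) _

lemma class_formula (p : ℕ) [Fact p.Prime] (hp5 : 5 ≤ p) (hp3 : p % 4 = 3)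
    (K : Type*) [Field K] [NumberField K]
    (α : K) (hα : α ^ 2 = -(p : K)) (hgen : Algebra.adjoin ℚ {α} = ⊤) :
    (classNumber K : ℝ) = -(1 / p) * ∑ k ∈ range p, (legendreSym p k : ℝ) * k := by
  obtain ⟨m, hm⟩ : ∃ m : ℤ, (p : ℤ) + 1 = 4 * m := ⟨((p : ℤ) + 1) / 4, by omega⟩
  obtain ⟨e⟩ := exists_equiv p Fact.out m hm α hα hgen
  have h1 := residue_L e p hp3 hm
  rw [residue_eq e (by omega) p hm, L_one p hp3] at h1
  have h2 := Complex.ofReal_injective h1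
  have hpos : Real.pi / Real.sqrt p ≠ 0 := by
    have : (0 : ℝ) < p := by exact_mod_cast (by omega : 0 < p)
    positivity
  exact mul_left_cancel₀ hpos h2

end CNF

theorem stmt_7 (p : ℕ) [Fact p.Prime] (hp5 : 5 ≤ p) (hp3 : p % 4 = 3)
    (K : Type*) [Field K] [NumberField K]
    (α : K) (hα : α ^ 2 = -(p : K)) (hgen : Algebra.adjoin ℚ {α} = ⊤) :
    (∑ k ∈ (Finset.range p).filter (fun k : ℕ => legendreSym p (k : ℤ) = 1), (k : ℚ) / p)
        = (p - 1) / 4 - (NumberField.classNumber K : ℚ) / 2 ∧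
    (∑ k ∈ (Finset.range p).filter (fun k : ℕ => legendreSym p (k : ℤ) = -1), (k : ℚ) / p)
        = (p - 1) / 4 + (NumberField.classNumber K : ℚ) / 2 := by
  have h := CNF.class_formula p hp5 hp3 K α hα hgen
  have hq : (NumberField.classNumber K : ℚ) = -(1 / p) * ∑ k ∈ range p, (legendreSym p k : ℚ) * k := by
    rw [← Rat.cast_inj (α := ℝ)]
    push_cast
    exact h
  have hp0 : (p : ℚ) ≠ 0 := by exact_mod_cast (by omega : p ≠ 0)
  have hleg : ∀ k ∈ range p, k = 0 ∨ legendreSym p (k : ℤ) = 1 ∨ legendreSym p (k : ℤ) = -1 := by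
    intro k hk
    by_cases h0 : k = 0
    · exact Or.inl h0
    · right
      apply legendreSym.eq_one_or_neg_one p
      push_cast
      rw [Ne, ZMod.natCast_eq_zero_iff]
      intro hd
      have := Nat.le_of_dvd (Nat.pos_of_ne_zero h0) hd
      have := mem_range.mp hk
      omega
  rw [sum_filter, sum_filter]
  set R := ∑ k ∈ range p, if legendreSym p (k : ℤ) = 1 then (k : ℚ) / p else 0
  set N := ∑ k ∈ range p, if legendreSym p (k : ℤ) = -1 then (k : ℚ) / p else 0
  have hadd : R + N = (p - 1) / 2 := by
    have e1 : R + N = ∑ k ∈ range p, (k : ℚ) / p := by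
      rw [← sum_add_distrib]
      refine sum_congr rfl fun k hk => ?_
      rcases hleg k hk with h0 | h0 | h0
      · subst h0; simp
      · rw [h0]; norm_num
      · rw [h0]; norm_num
    have e2 : (∑ k ∈ range p, (k : ℚ)) * 2 = p * (p - 1) := by
      have := sum_range_id_mul_two p
      have h3 : ((p - 1 : ℕ) : ℚ) = p - 1 := by
        rw [Nat.cast_sub (by omega)]; simp
      rw [← h3]
      have h4 := congrArg (Nat.cast : ℕ → ℚ) this
      rw [Nat.cast_mul, Nat.cast_mul, Nat.cast_sum] at h4
      exact h4
    rw [e1, ← sum_div]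
    field_simp
    linarith
  have hsub : R - N = -(NumberField.classNumber K : ℚ) := by
    rw [hq, ← sum_sub_distrib, mul_sum, ← sum_neg_distrib]
    refine sum_congr rfl fun k hk => ?_
    rcases hleg k hk with h0 | h0 | h0
    · subst h0; simp
    · rw [h0]; norm_num; ring
    · rw [h0]; norm_num; ring
  constructor <;> linarith
end
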